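/- arXiv:1709.06608 — 8 statements merged into one kernel-verified Lean document; each statement's English description precedes it below -/
import Mathlib

section
/- Let Q be an arbitrary quadratic form on a real vector space V and let Cl(Q) be its Clifford algebra. Denote by j̄ (j = 0,1,2,3) the subspaces of quaternion type. Then for the commutator [U,V] := UV − VU the following inclusions hold: [j̄, j̄] ⊆ 2̄ for every j ∈ {0,1,2,3}; [j̄, 2̄] ⊆ j̄ for every j ∈ {0,1,2,3}; [0̄, 1̄] ⊆ 3̄; [0̄, 3̄] ⊆ 1̄; and [1̄, 3̄] ⊆ 0̄. (An inclusion [S,T] ⊆ W means: for all U ∈ S and V ∈ T, UV − VU ∈ W.) -/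
open CliffordAlgebra

/-- The subspace of quaternion type `j` (j = 0,1,2,3) of a Clifford algebra:
elements `U` with `involute U = (−1)^j • U` and `reverse U = (−1)^{j(j−1)/2} • U`. -/
def quatType {V : Type*} [AddCommGroup V] [Module ℝ V] (Q : QuadraticForm ℝ V) (j : ℕ) :
    Set (CliffordAlgebra Q) :=
  {U | involute U = ((-1 : ℝ) ^ j) • U ∧ reverse U = ((-1 : ℝ) ^ (j * (j - 1) / 2)) • U}

theorem quatType_comm_aux {V : Type*} [AddCommGroup V] [Module ℝ V]
    (Q : QuadraticForm ℝ V) (j k l : ℕ)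
    (h1 : (-1 : ℝ) ^ j * (-1 : ℝ) ^ k = (-1 : ℝ) ^ l)
    (h2 : (-1 : ℝ) ^ (j * (j - 1) / 2) * (-1 : ℝ) ^ (k * (k - 1) / 2)
      = -(-1 : ℝ) ^ (l * (l - 1) / 2))
    (U : CliffordAlgebra Q) (hU : U ∈ quatType Q j) (W : CliffordAlgebra Q)
    (hW : W ∈ quatType Q k) : U * W - W * U ∈ quatType Q l := by
  obtain ⟨a, b⟩ := hU
  obtain ⟨c, d⟩ := hW
  constructor
  · rw [map_sub, map_mul, map_mul, a, c, smul_mul_smul_comm, smul_mul_smul_comm,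
      mul_comm ((-1 : ℝ) ^ k), h1, smul_sub]
  · rw [map_sub, reverse.map_mul, reverse.map_mul, b, d, smul_mul_smul_comm,
      smul_mul_smul_comm, mul_comm ((-1 : ℝ) ^ (k * (k - 1) / 2)), h2, neg_smul, neg_smul,
      smul_sub]
    abel

/-- Commutator inclusions between the subspaces of quaternion type:
`[j̄, j̄] ⊆ 2̄`, `[j̄, 2̄] ⊆ j̄`, `[0̄, 1̄] ⊆ 3̄`, `[0̄, 3̄] ⊆ 1̄`, `[1̄, 3̄] ⊆ 0̄`. -/
theorem quatType_commutator {V : Type*} [AddCommGroup V] [Module ℝ V]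
    (Q : QuadraticForm ℝ V) :
    (∀ j : Fin 4, ∀ U ∈ quatType Q j, ∀ W ∈ quatType Q j,
        U * W - W * U ∈ quatType Q 2) ∧
    (∀ j : Fin 4, ∀ U ∈ quatType Q j, ∀ W ∈ quatType Q 2,
        U * W - W * U ∈ quatType Q j) ∧
    (∀ U ∈ quatType Q 0, ∀ W ∈ quatType Q 1, U * W - W * U ∈ quatType Q 3) ∧
    (∀ U ∈ quatType Q 0, ∀ W ∈ quatType Q 3, U * W - W * U ∈ quatType Q 1) ∧
    (∀ U ∈ quatType Q 1, ∀ W ∈ quatType Q 3, U * W - W * U ∈ quatType Q 0) := by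
  refine ⟨?_, ?_, ?_, ?_, ?_⟩
  · intro j
    apply quatType_comm_aux <;> fin_cases j <;> norm_num
  · intro j
    apply quatType_comm_aux <;> fin_cases j <;> norm_num
  all_goals apply quatType_comm_aux <;> norm_num
end

section
/- Let Q be an arbitrary quadratic form on a real vector space V and let Cl(Q) be its Clifford algebra. Denote by j̄ (j = 0,1,2,3) the subspaces of quaternion type. Then for the anticommutator {U,V} := UV + VU the following inclusions hold: {j̄, j̄} ⊆ 0̄ for every j ∈ {0,1,2,3}; {j̄, 0̄} ⊆ j̄ for every j ∈ {0,1,2,3}; {1̄, 2̄} ⊆ 3̄; {2̄, 3̄} ⊆ 1̄; and {3̄, 1̄} ⊆ 2̄. (An inclusion {S,T} ⊆ W means: for all U ∈ S and V ∈ T, UV + VU ∈ W.) -/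
open CliffordAlgebra

theorem quatType_aux {V : Type*} [AddCommGroup V] [Module ℝ V]
    (Q : QuadraticForm ℝ V) (i j k : ℕ) (h1 : (-1 : ℝ) ^ i * (-1) ^ j = (-1) ^ k)
    (h2 : (-1 : ℝ) ^ (i * (i - 1) / 2) * (-1) ^ (j * (j - 1) / 2) = (-1) ^ (k * (k - 1) / 2))
    (U : CliffordAlgebra Q) (hU : U ∈ quatType Q i) (W : CliffordAlgebra Q) (hW : W ∈ quatType Q j) :
    U * W + W * U ∈ quatType Q k := by
  obtain ⟨a, b⟩ := hU
  obtain ⟨c, d⟩ := hW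
  refine ⟨?_, ?_⟩
  · rw [map_add, map_mul, map_mul, a, c, ← h1]
    simp only [smul_mul_smul_comm, smul_add]
    rw [mul_comm ((-1 : ℝ) ^ j)]
  · rw [map_add, reverse.map_mul, reverse.map_mul, b, d, ← h2]
    simp only [smul_mul_smul_comm, smul_add]
    rw [mul_comm ((-1 : ℝ) ^ (j * (j - 1) / 2)), add_comm]

/-- Anticommutator inclusions between the subspaces of quaternion type:
`{j̄, j̄} ⊆ 0̄`, `{j̄, 0̄} ⊆ j̄`, `{1̄, 2̄} ⊆ 3̄`, `{2̄, 3̄} ⊆ 1̄`, `{3̄, 1̄} ⊆ 2̄`. -/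
theorem quatType_anticommutator {V : Type*} [AddCommGroup V] [Module ℝ V]
    (Q : QuadraticForm ℝ V) :
    (∀ j : Fin 4, ∀ U ∈ quatType Q j, ∀ W ∈ quatType Q j,
        U * W + W * U ∈ quatType Q 0) ∧
    (∀ j : Fin 4, ∀ U ∈ quatType Q j, ∀ W ∈ quatType Q 0,
        U * W + W * U ∈ quatType Q j) ∧
    (∀ U ∈ quatType Q 1, ∀ W ∈ quatType Q 2, U * W + W * U ∈ quatType Q 3) ∧
    (∀ U ∈ quatType Q 2, ∀ W ∈ quatType Q 3, U * W + W * U ∈ quatType Q 1) ∧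
    (∀ U ∈ quatType Q 3, ∀ W ∈ quatType Q 1, U * W + W * U ∈ quatType Q 2) := by
  refine ⟨fun j U hU W hW => quatType_aux Q j j 0 ?_ ?_ U hU W hW,
    fun j U hU W hW => quatType_aux Q j 0 j ?_ ?_ U hU W hW,
    quatType_aux Q 1 2 3 ?_ ?_, quatType_aux Q 2 3 1 ?_ ?_, quatType_aux Q 3 1 2 ?_ ?_⟩
  · rw [← mul_pow]; simp
  · rw [← mul_pow]; simp
  all_goals norm_num
end

section
/- Let n = p + q be even. Then the center of the real Clifford algebra Cl_{p,q} consists exactly of the scalar multiples of the identity: Cen(Cl_{p,q}) = {u·e : u ∈ ℝ}, i.e. the center equals the image of the algebra map ℝ → Cl_{p,q}. -/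
open CliffordAlgebra

/-- The quadratic form of signature `(p, q)` on `ℝ^(p+q)`:
`Q(x) = x₁² + ⋯ + x_p² − x_{p+1}² − ⋯ − x_{p+q}²`. -/
noncomputable def Qpq (p q : ℕ) : QuadraticForm ℝ (Fin (p + q) → ℝ) :=
  QuadraticMap.weightedSumSquares ℝ (fun i : Fin (p + q) => if (i : ℕ) < p then (1 : ℝ) else -1)

/-- The real Clifford algebra `Cl_{p,q}`. -/
noncomputable abbrev Cl (p q : ℕ) : Type := CliffordAlgebra (Qpq p q)

/-- The generators `e_a` of `Cl_{p,q}`. -/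
noncomputable def gen (p q : ℕ) (i : Fin (p + q)) : Cl p q :=
  ι (Qpq p q) (Pi.single i 1)


noncomputable def cl_eta (p q : ℕ) (i : Fin (p + q)) : ℝ := if (i : ℕ) < p then (1 : ℝ) else -1

noncomputable def cl_word (p q : ℕ) (l : List (Fin (p + q))) : Cl p q := (l.map (gen p q)).prod

lemma cl_eta_sq (p q : ℕ) (i) : cl_eta p q i * cl_eta p q i = 1 := by
  unfold cl_eta; split_ifs <;> norm_num

lemma cl_gen_sq (p q : ℕ) (i) : gen p q i * gen p q i = cl_eta p q i • (1 : Cl p q) := by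
  unfold gen
  rw [CliffordAlgebra.ι_sq_scalar, Algebra.algebraMap_eq_smul_one]
  congr 1
  simp [Qpq, QuadraticMap.weightedSumSquares_apply, Pi.single_apply, cl_eta]

lemma cl_gen_anti (p q : ℕ) (i j) (h : i ≠ j) :
    gen p q i * gen p q j = - (gen p q j * gen p q i) := by
  unfold gen
  rw [eq_neg_iff_add_eq_zero, CliffordAlgebra.ι_mul_ι_add_swap]
  have : QuadraticMap.polar (Qpq p q) (Pi.single i 1) (Pi.single j 1) = 0 := by
    simp only [QuadraticMap.polar, Qpq, QuadraticMap.weightedSumSquares_apply, Pi.add_apply,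
      ← Finset.sum_sub_distrib]
    apply Finset.sum_eq_zero
    intro k _
    by_cases h1 : k = i
    · subst h1; simp [Pi.single_apply, h]
    · simp [Pi.single_apply, h1]
  rw [this, map_zero]

lemma cl_word_comm (p q : ℕ) (i) (l : List (Fin (p + q))) :
    gen p q i * cl_word p q l
      = ((-1 : ℝ) ^ (l.length + l.count i)) • (cl_word p q l * gen p q i) := by
  induction l with
  | nil => simp [cl_word]
  | cons j l ih =>
    have hc : cl_word p q (j :: l) = gen p q j * cl_word p q l := by simp [cl_word]
    rw [hc]
    by_cases hij : j = i
    · subst hij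
      rw [mul_assoc (gen p q j) (cl_word p q l), ← mul_smul_comm]
      congr 1
      rw [ih, List.length_cons, List.count_cons_self]
      congr 1
      ring
    · rw [← mul_assoc, cl_gen_anti p q i j (Ne.symm hij), neg_mul, mul_assoc, ih,
        List.length_cons, List.count_cons_of_ne hij, mul_smul_comm, mul_assoc, ← neg_smul]
      congr 1
      ring

lemma cl_word_even (p q : ℕ) (n : ℕ) : ∀ l : List (Fin (p + q)), l.length ≤ n →
    (∀ i, Even (l.count i)) → ∃ r : ℝ, cl_word p q l = r • 1 := by
  induction n with
  | zero =>
    intro l hl _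
    have : l = [] := List.length_eq_zero_iff.mp (by omega)
    subst this
    exact ⟨1, by simp [cl_word]⟩
  | succ n ih =>
    intro l hl he
    cases l with
    | nil => exact ⟨1, by simp [cl_word]⟩
    | cons j l =>
      have hj : j ∈ l := by
        by_contra hj
        have := he j
        rw [List.count_cons_self, List.count_eq_zero_of_not_mem hj] at this
        simp at this
      obtain ⟨u, v, rfl⟩ := List.append_of_mem hj
      obtain ⟨r, hr⟩ := ih (u ++ v) (by simp at hl ⊢; omega) (by
        intro i
        have := he i
        by_cases hij : j = i
        · subst hij
          simp only [List.count_cons_self, List.count_append] at this ⊢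
          grind
        · simpa [List.count_cons_of_ne hij, List.count_append] using this)
      have e1 : cl_word p q (j :: (u ++ j :: v))
          = (gen p q j * cl_word p q u) * (gen p q j * cl_word p q v) := by
        simp [cl_word, mul_assoc]
      have e2 : cl_word p q u * cl_word p q v = r • 1 := by rw [← hr]; simp [cl_word]
      refine ⟨(-1 : ℝ) ^ (u.length + u.count j) * (cl_eta p q j * r), ?_⟩
      rw [e1, cl_word_comm, smul_mul_assoc, mul_assoc, ← mul_assoc (gen p q j), cl_gen_sq,
        smul_mul_assoc, one_mul, mul_smul_comm, e2, smul_smul, smul_smul]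
      congr 1
      ring

lemma cl_exists_anti (p q : ℕ) (h : Even (p + q)) (l : List (Fin (p + q)))
    (hl : ∀ i, Even (l.length + l.count i)) : ∀ i, Even (l.count i) := by
  have hs : ∑ i, l.count i = l.length := by
    have := Multiset.sum_count_eq_card (s := Finset.univ) (m := (l : Multiset (Fin (p + q))))
      (fun _ _ => Finset.mem_univ _)
    simpa using this
  have h1 : Even (∑ i, (l.length + l.count i)) := Finset.even_sum _ (fun i _ => hl i)
  rw [Finset.sum_add_distrib, hs] at h1
  simp only [Finset.sum_const, Finset.card_univ, Fintype.card_fin, smul_eq_mul] at h1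
  have h2 : Even l.length := (Nat.even_add.mp h1).mp (h.mul_right _)
  intro i
  exact (Nat.even_add.mp (hl i)).mp h2

noncomputable def cl_proj (p q : ℕ) (i : Fin (p + q)) : Cl p q →ₗ[ℝ] Cl p q :=
  (1 / 2 : ℝ) • (LinearMap.id + cl_eta p q i •
    (LinearMap.mulLeft ℝ (gen p q i) ∘ₗ LinearMap.mulRight ℝ (gen p q i)))

lemma cl_proj_apply (p q : ℕ) (i) (x : Cl p q) : cl_proj p q i x =
    (1 / 2 : ℝ) • (x + cl_eta p q i • (gen p q i * x * gen p q i)) := by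
  simp [cl_proj, mul_assoc]

lemma cl_proj_of_comm (p q : ℕ) (i) (x : Cl p q) (s : ℝ)
    (h : gen p q i * x = s • (x * gen p q i)) :
    cl_proj p q i x = ((1 + s) / 2) • x := by
  rw [cl_proj_apply, h, smul_mul_assoc, mul_assoc, cl_gen_sq, mul_smul_comm, mul_one, smul_smul,
    smul_smul, mul_right_comm, cl_eta_sq]
  module

noncomputable def cl_projs (p q : ℕ) : List (Fin (p + q)) → Cl p q →ₗ[ℝ] Cl p q
  | [] => LinearMap.id
  | i :: t => cl_projs p q t ∘ₗ cl_proj p q i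

lemma cl_projs_central (p q : ℕ) (x : Cl p q) (h : ∀ V, x * V = V * x) (t) :
    cl_projs p q t x = x := by
  induction t with
  | nil => rfl
  | cons i t ih =>
    simp only [cl_projs, LinearMap.comp_apply]
    rw [cl_proj_of_comm p q i x 1 (by rw [h, one_smul])]
    norm_num [ih]

lemma cl_projs_word (p q : ℕ) (l t : List (Fin (p + q))) :
    cl_projs p q t (cl_word p q l) = 0 ∨
    (cl_projs p q t (cl_word p q l) = cl_word p q l ∧ ∀ i ∈ t, Even (l.length + l.count i)) := by
  induction t with
  | nil => right; simp [cl_projs]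
  | cons i t ih =>
    simp only [cl_projs, LinearMap.comp_apply]
    rw [cl_proj_of_comm p q i _ _ (cl_word_comm p q i l)]
    rcases Nat.even_or_odd (l.length + l.count i) with he | ho
    · rw [he.neg_one_pow]
      norm_num
      rcases ih with ih | ih
      · left; exact ih
      · right; exact ⟨ih.1, he, ih.2⟩
    · left
      rw [ho.neg_one_pow]
      simp

lemma cl_span (p q : ℕ) (x : Cl p q) : x ∈ Submodule.span ℝ (Set.range (cl_word p q)) := by
  induction x using CliffordAlgebra.left_induction with
  | algebraMap r =>
    rw [Algebra.algebraMap_eq_smul_one]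
    exact Submodule.smul_mem _ _ (Submodule.subset_span ⟨[], by simp [cl_word]⟩)
  | add x y hx hy => exact Submodule.add_mem _ hx hy
  | ι_mul x m hx =>
    have hm : ι (Qpq p q) m = ∑ i, m i • gen p q i := by
      conv_lhs => rw [pi_eq_sum_univ' m]
      simp only [map_sum, map_smul, gen]
    rw [hm, Finset.sum_mul]
    refine Submodule.sum_mem _ fun i _ => ?_
    rw [smul_mul_assoc]
    refine Submodule.smul_mem _ _ ?_
    induction hx using Submodule.span_induction with
    | mem x hx =>
      obtain ⟨l, rfl⟩ := hx
      exact Submodule.subset_span ⟨i :: l, by simp [cl_word]⟩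
    | zero => simp
    | add x y _ _ hx hy => rw [mul_add]; exact Submodule.add_mem _ hx hy
    | smul a x _ hx => rw [mul_smul_comm]; exact Submodule.smul_mem _ _ hx

lemma cl_projs_scalar (p q : ℕ) (h : Even (p + q)) (x : Cl p q) :
    ∃ r : ℝ, cl_projs p q (List.finRange (p + q)) x = r • 1 := by
  induction cl_span p q x using Submodule.span_induction with
  | mem x hx =>
    obtain ⟨l, rfl⟩ := hx
    rcases cl_projs_word p q l (List.finRange (p + q)) with h0 | ⟨h0, h1⟩
    · exact ⟨0, by rw [h0, zero_smul]⟩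
    · rw [h0]
      exact cl_word_even p q _ l le_rfl
        (cl_exists_anti p q h l fun i => h1 i (List.mem_finRange i))
  | zero => exact ⟨0, by simp⟩
  | add x y _ _ hx hy =>
    obtain ⟨a, ha⟩ := hx
    obtain ⟨b, hb⟩ := hy
    exact ⟨a + b, by rw [map_add, ha, hb, add_smul]⟩
  | smul a x _ hx =>
    obtain ⟨b, hb⟩ := hx
    exact ⟨a * b, by rw [map_smul, hb, smul_smul]⟩

/-- If `n = p + q` is even, the center of `Cl_{p,q}` is exactly the set of real
scalar multiples of the identity, i.e. the range of the algebra map `ℝ → Cl_{p,q}`. -/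
theorem center_of_even (p q : ℕ) (h : Even (p + q)) :
    {U : Cl p q | ∀ V : Cl p q, U * V = V * U} =
      Set.range (algebraMap ℝ (Cl p q)) := by
  ext U
  constructor
  · intro hU
    obtain ⟨r, hr⟩ := cl_projs_scalar p q h U
    rw [cl_projs_central p q U hU] at hr
    exact ⟨r, by rw [hr, Algebra.algebraMap_eq_smul_one]⟩
  · rintro ⟨r, rfl⟩ V
    exact Algebra.commutes r V
end

section
/- For all p ≥ 4 and q ≥ 0 there is an isomorphism of real associative unital algebras Cl_{p, q} ≅ Cl_{p−4, q+4}. -/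
open CliffordAlgebra

set_option linter.unusedSimpArgs false

/-- ring identities for four anticommuting elements -/
theorem omega_facts {A : Type*} [Ring A] (s : A) (hs : s * s = 1) (e : Fin 4 → A)
    (hc : ∀ x, x * s = s * x) (h1 : ∀ i, e i * e i = s)
    (h2 : ∀ i j, i ≠ j → e j * e i = -(e i * e j)) :
    (∀ i, (e 0 * e 1 * e 2 * e 3) * e i = -(e i * (e 0 * e 1 * e 2 * e 3))) ∧
    (e 0 * e 1 * e 2 * e 3) * (e 0 * e 1 * e 2 * e 3) = 1 := by
  have r (x y z : A) (h : y * x = -(x * y)) : y * (x * z) = -(x * (y * z)) := by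
    rw [← mul_assoc, h, neg_mul, mul_assoc]
  have q (i : Fin 4) (z : A) : e i * (e i * z) = s * z := by rw [← mul_assoc, h1]
  have k (x z : A) : x * (s * z) = s * (x * z) := by rw [← mul_assoc, hc, mul_assoc]
  have a10 := h2 0 1 (by decide)
  have a20 := h2 0 2 (by decide)
  have a30 := h2 0 3 (by decide)
  have a21 := h2 1 2 (by decide)
  have a31 := h2 1 3 (by decide)
  have a32 := h2 2 3 (by decide)
  have b10 := fun z => r _ _ z a10
  have b20 := fun z => r _ _ z a20
  have b30 := fun z => r _ _ z a30
  have b21 := fun z => r _ _ z a21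
  have b31 := fun z => r _ _ z a31
  have b32 := fun z => r _ _ z a32
  have k' (i : Fin 4) (z : A) := k (e i) z
  have hc' (i : Fin 4) := hc (e i)
  have hs' (z : A) : s * (s * z) = z := by rw [← mul_assoc, hs, one_mul]
  constructor
  · intro i
    fin_cases i <;>
    simp [mul_assoc, a10, a20, a30, a21, a31, a32, b10, b20, b30, b21, b31, b32, k', hc', h1, q]
  · simp [mul_assoc, a10, a20, a30, a21, a31, a32, b10, b20, b30, b21, b31, b32, k', hc', h1, q,
      hs, hs']

section Shift
variable {M : Type*} [AddCommGroup M] [Module ℝ M] (Q : QuadraticForm ℝ M)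

/-- the form `s·|x|² + Q` -/
noncomputable def QS (s : ℝ) : QuadraticForm ℝ ((Fin 4 → ℝ) × M) :=
  (QuadraticMap.weightedSumSquares ℝ (fun _ : Fin 4 => s)).prod Q

/-- first four generators -/
noncomputable def eS (s : ℝ) (i : Fin 4) : CliffordAlgebra (QS Q s) :=
  ι (QS Q s) (Pi.single i 1, 0)

/-- volume element -/
noncomputable def oS (s : ℝ) : CliffordAlgebra (QS Q s) :=
  eS Q s 0 * eS Q s 1 * eS Q s 2 * eS Q s 3

theorem eS_sq (s : ℝ) (i : Fin 4) : eS Q s i * eS Q s i = algebraMap ℝ _ s := by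
  rw [eS, ι_sq_scalar]
  congr 1
  simp [QS, QuadraticMap.weightedSumSquares_apply, Pi.single_apply]

theorem eS_anti (s : ℝ) (i j : Fin 4) (h : i ≠ j) :
    eS Q s j * eS Q s i = -(eS Q s i * eS Q s j) := by
  rw [eq_neg_iff_add_eq_zero, eS, eS, ι_mul_ι_add_swap, QuadraticMap.polar]
  refine Eq.trans (congrArg _ ?_) (map_zero (algebraMap ℝ (CliffordAlgebra (QS Q s))))
  simp only [QS, QuadraticMap.prod_apply, QuadraticMap.weightedSumSquares_apply]
  fin_cases i <;> fin_cases j <;> simp [Fin.sum_univ_four, Pi.single_apply] at h ⊢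

theorem m_anti (s : ℝ) (x : Fin 4 → ℝ) (m : M) :
    ι (QS Q s) (0, m) * ι (QS Q s) (x, 0) = -(ι (QS Q s) (x, 0) * ι (QS Q s) (0, m)) := by
  rw [eq_neg_iff_add_eq_zero, ι_mul_ι_add_swap, QuadraticMap.polar]
  refine Eq.trans (congrArg _ ?_) (map_zero (algebraMap ℝ (CliffordAlgebra (QS Q s))))
  simp [QS]

theorem oS_comm (s : ℝ) (m : M) : oS Q s * ι (QS Q s) (0, m) = ι (QS Q s) (0, m) * oS Q s := by
  have a (i : Fin 4) : ι (QS Q s) (0, m) * eS Q s i = -(eS Q s i * ι (QS Q s) (0, m)) :=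
    m_anti Q s _ m
  have b (i : Fin 4) (z) : ι (QS Q s) (0, m) * (eS Q s i * z)
      = -(eS Q s i * (ι (QS Q s) (0, m) * z)) := by
    rw [← mul_assoc, a, neg_mul, mul_assoc]
  simp [oS, mul_assoc, a, b]

theorem ι_sum (s : ℝ) (x : Fin 4 → ℝ) : ι (QS Q s) (x, 0) = ∑ i, x i • eS Q s i := by
  simp only [eS, ← map_smul, ← map_sum]
  congr 1
  ext j
  · simp [Prod.fst_sum, Finset.sum_apply, Pi.single_apply]
  · simp [Prod.snd_sum]

variable {s : ℝ} (hs : s * s = 1)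
include hs

theorem oS_facts : (∀ i, oS Q s * eS Q s i = -(eS Q s i * oS Q s)) ∧ oS Q s * oS Q s = 1 :=
  omega_facts (algebraMap ℝ _ s) (by rw [← map_mul, hs, map_one]) (eS Q s)
    (fun x => (Algebra.commutes s x).symm) (eS_sq Q s) (eS_anti Q s)

theorem oS_anti (x : Fin 4 → ℝ) :
    oS Q s * ι (QS Q s) (x, 0) = -(ι (QS Q s) (x, 0) * oS Q s) := by
  rw [ι_sum, Finset.mul_sum, Finset.sum_mul, ← Finset.sum_neg_distrib]
  refine Finset.sum_congr rfl fun i _ => ?_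
  rw [mul_smul_comm, (oS_facts Q hs).1, smul_mul_assoc, smul_neg]
omit hs

/-- the underlying linear map -/
noncomputable def fS (s : ℝ) : ((Fin 4 → ℝ) × M) →ₗ[ℝ] CliffordAlgebra (QS Q s) :=
  (LinearMap.mulRight ℝ (oS Q s)) ∘ₗ (ι (QS Q s)) ∘ₗ LinearMap.inl ℝ _ _ ∘ₗ LinearMap.fst ℝ _ _
  + (ι (QS Q s)) ∘ₗ LinearMap.inr ℝ _ _ ∘ₗ LinearMap.snd ℝ _ _

theorem fS_apply (s : ℝ) (x : Fin 4 → ℝ) (m : M) :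
    fS Q s (x, m) = ι (QS Q s) (x, 0) * oS Q s + ι (QS Q s) (0, m) := by
  simp [fS]

include hs
theorem fS_sq {t : ℝ} (ht : t = -s) (v) : fS Q s v * fS Q s v = algebraMap ℝ _ (QS Q t v) := by
  obtain ⟨x, m⟩ := v
  subst ht
  rw [fS_apply]
  have h1 := oS_anti Q hs x
  have h2 := (oS_facts Q hs).2
  have h3 := oS_comm Q s m
  have h4 := m_anti Q s x m
  have h5 := ι_sq_scalar (QS Q s) (x, 0)
  have h6 := ι_sq_scalar (QS Q s) (0, m)
  have h7 : QS Q (-s) (x, m) = - QS Q s (x, 0) + QS Q s (0, m) := by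
    simp [QS, QuadraticMap.weightedSumSquares_apply]
  rw [h7, map_add, map_neg, ← h5, ← h6]
  generalize ι (QS Q s) (x, 0) = a at *
  generalize ι (QS Q s) (0, m) = b at *
  generalize oS Q s = o at *
  have e1 : a * o * (a * o) = -(a * a) := by
    rw [mul_assoc, ← mul_assoc o, h1, neg_mul, mul_assoc, h2, mul_one, mul_neg]
  have e2 : b * (a * o) = -(a * o * b) := by
    rw [← mul_assoc, h4, neg_mul, mul_assoc, mul_assoc, h3]
  rw [mul_add, add_mul, add_mul, e1, e2]
  abel

/-- the algebra map -/
noncomputable def FS {t : ℝ} (ht : t = -s) : CliffordAlgebra (QS Q t) →ₐ[ℝ] CliffordAlgebra (QS Q s) :=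
  CliffordAlgebra.lift (QS Q t) ⟨fS Q s, fS_sq Q hs ht⟩

theorem FS_ι {t : ℝ} (ht : t = -s) (x : Fin 4 → ℝ) (m : M) :
    FS Q hs ht (ι _ (x, m)) = ι (QS Q s) (x, 0) * oS Q s + ι (QS Q s) (0, m) := by
  rw [FS, lift_ι_apply, fS_apply]

theorem FS_o {t : ℝ} (ht : t = -s) : FS Q hs ht (oS Q t) = oS Q s := by
  have h (i) : FS Q hs ht (eS Q t i) = eS Q s i * oS Q s := by
    rw [eS, FS_ι, eS, ← Prod.zero_eq_mk, map_zero, add_zero]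
  have h2 (i j) : eS Q s i * oS Q s * (eS Q s j * oS Q s) = - (eS Q s i * eS Q s j) := by
    rw [mul_assoc, ← mul_assoc (oS Q s), (oS_facts Q hs).1, neg_mul, mul_assoc,
      (oS_facts Q hs).2, mul_one, mul_neg]
  rw [oS, map_mul, map_mul, map_mul, h, h, h, h, h2, mul_assoc, h2, neg_mul_neg, oS]
  simp only [mul_assoc]

theorem FS_FS {t : ℝ} (ht : t = -s) (ht' : s = -t) (hs' : t * t = 1) :
    (FS Q hs ht).comp (FS Q hs' ht') = AlgHom.id ℝ _ := by
  apply CliffordAlgebra.hom_ext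
  refine LinearMap.ext fun ⟨x, m⟩ => ?_
  simp only [LinearMap.comp_apply, AlgHom.toLinearMap_apply, AlgHom.comp_apply, AlgHom.id_apply]
  rw [FS_ι, map_add, map_mul, FS_o, FS_ι, FS_ι, ← Prod.zero_eq_mk, map_zero, zero_mul, add_zero,
    zero_add, mul_assoc, (oS_facts Q hs).2, mul_one, ← map_add]
  simp
omit hs

theorem shift_equiv : Nonempty (CliffordAlgebra (QS Q 1) ≃ₐ[ℝ] CliffordAlgebra (QS Q (-1))) :=
  ⟨AlgEquiv.ofAlgHom (FS Q (s := -1) (t := 1) (by norm_num) (by norm_num))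
    (FS Q (s := 1) (t := -1) (by norm_num) (by norm_num))
    (FS_FS Q _ _ _ _) (FS_FS Q _ _ _ _)⟩
end Shift

theorem reindex_equiv {n k : ℕ} (s : ℝ) (w : Fin n → ℝ) (w' : Fin k → ℝ) (σ : Fin 4 ⊕ Fin n ≃ Fin k)
    (h1 : ∀ i, w' (σ (.inl i)) = s) (h2 : ∀ j, w' (σ (.inr j)) = w j) :
    Nonempty (CliffordAlgebra (QuadraticMap.weightedSumSquares ℝ w') ≃ₐ[ℝ]
      CliffordAlgebra (QS (QuadraticMap.weightedSumSquares ℝ w) s)) := by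
  refine ⟨CliffordAlgebra.equivOfIsometry
    { (LinearEquiv.funCongrLeft ℝ ℝ σ).trans (LinearEquiv.sumArrowLequivProdArrow _ _ ℝ ℝ) with
      map_app' := fun x => ?_ }⟩
  simp only [QS, QuadraticMap.prod_apply, QuadraticMap.weightedSumSquares_apply]
  rw [← σ.sum_comp, Fintype.sum_sum_type]
  simp only [h1, h2]
  rfl

/-- `Cl_{p,q} ≅ Cl_{p−4,q+4}` for `p ≥ 4`, as real associative unital algebras. -/
theorem cl_iso_shift_four (p q : ℕ) (hp : 4 ≤ p) :
    Nonempty (Cl p q ≃ₐ[ℝ] Cl (p - 4) (q + 4)) := by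
  obtain ⟨r, rfl⟩ := Nat.exists_eq_add_of_le' hp
  change Nonempty (Cl (r + 4) q ≃ₐ[ℝ] Cl r (q + 4))
  obtain ⟨f⟩ := reindex_equiv 1 (fun i : Fin (r + q) => if (i : ℕ) < r then (1 : ℝ) else -1)
    (fun i : Fin (r + 4 + q) => if (i : ℕ) < r + 4 then (1 : ℝ) else -1)
    (finSumFinEquiv.trans (finCongr (by omega)))
    (fun i => by
      have : (i : ℕ) < r + 4 := by omega
      simp [this])
    (fun j => by
      have : 4 + (j : ℕ) < r + 4 ↔ (j : ℕ) < r := by omega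
      simp [this])
  obtain ⟨g⟩ := reindex_equiv (-1) (fun i : Fin (r + q) => if (i : ℕ) < r then (1 : ℝ) else -1)
    (fun i : Fin (r + (q + 4)) => if (i : ℕ) < r then (1 : ℝ) else -1)
    ((Equiv.sumComm _ _).trans (finSumFinEquiv.trans (finCongr (by omega))))
    (fun i => by
      have : ¬ (r + q + (i : ℕ) < r) := by omega
      simp [this])
    (fun j => by simp)
  obtain ⟨h⟩ := shift_equiv (QuadraticMap.weightedSumSquares ℝ
    (fun i : Fin (r + q) => if (i : ℕ) < r then (1 : ℝ) else -1))
  exact ⟨(f.trans h).trans g.symm⟩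
end

section
/- (Cartan's classification) Let n = p + q. Then there are isomorphisms of real associative unital algebras: Cl_{p,q} ≅ Mat(2^{n/2}, ℝ) if p − q ≡ 0 or 2 (mod 8); Cl_{p,q} ≅ Mat(2^{(n−1)/2}, ℝ) ⊕ Mat(2^{(n−1)/2}, ℝ) if p − q ≡ 1 (mod 8); Cl_{p,q} ≅ Mat(2^{(n−1)/2}, ℂ) if p − q ≡ 3 or 7 (mod 8); Cl_{p,q} ≅ Mat(2^{(n−2)/2}, ℍ) if p − q ≡ 4 or 6 (mod 8); Cl_{p,q} ≅ Mat(2^{(n−3)/2}, ℍ) ⊕ Mat(2^{(n−3)/2}, ℍ) if p − q ≡ 5 (mod 8). Here ℍ is the algebra of real quaternions, Mat(k, A) is the algebra of k×k matrices over A, and ⊕ is the direct product of algebras. -/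
open CliffordAlgebra

set_option linter.all false
open scoped TensorProduct Quaternion

namespace CartanAux

section tens
variable {M : Type*} [AddCommGroup M] [Module ℝ M] (Q : QuadraticForm ℝ M) (c₁ c₂ l : ℝ)

abbrev QP : QuadraticForm ℝ (M × (ℝ × ℝ)) := Q.prod (CliffordAlgebraQuaternion.Q c₁ c₂)

/-- the basis `i, j, k` of a quaternion algebra -/
abbrev bs : QuaternionAlgebra.Basis ℍ[ℝ,c₁,0,c₂] c₁ 0 c₂ := QuaternionAlgebra.Basis.self ℝ

noncomputable def fwdLin : (M × (ℝ × ℝ)) →ₗ[ℝ] CliffordAlgebra (l • Q) ⊗[ℝ] ℍ[ℝ,c₁,0,c₂] :=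
  LinearMap.coprod
    ((TensorProduct.mk ℝ _ _).flip (bs c₁ c₂).k ∘ₗ ι (l • Q))
    (LinearMap.coprod (LinearMap.toSpanSingleton ℝ _ (1 ⊗ₜ (bs c₁ c₂).i))
      (LinearMap.toSpanSingleton ℝ _ (1 ⊗ₜ (bs c₁ c₂).j)))

lemma fwdLin_apply (m : M) (x y : ℝ) : fwdLin Q c₁ c₂ l (m, (x, y)) =
    ι (l • Q) m ⊗ₜ (bs c₁ c₂).k + (x • (1 ⊗ₜ (bs c₁ c₂).i) + y • (1 ⊗ₜ (bs c₁ c₂).j)) := rfl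

variable (hl : l = -(c₁ * c₂)) (hl2 : l * l = 1)

include hl hl2 in
lemma fwdLin_sq (v : M × (ℝ × ℝ)) : fwdLin Q c₁ c₂ l v * fwdLin Q c₁ c₂ l v =
    algebraMap ℝ _ (QP Q c₁ c₂ v) := by
  obtain ⟨m, x, y⟩ := v
  have hk : (bs c₁ c₂).k * (bs c₁ c₂).k = l • 1 := by
    rw [QuaternionAlgebra.Basis.k_mul_k, hl, neg_smul]
  rw [fwdLin_apply]
  simp only [add_mul, mul_add, smul_mul_assoc, mul_smul_comm, Algebra.TensorProduct.tmul_mul_tmul,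
    one_mul, mul_one, hk, ι_sq_scalar, QuaternionAlgebra.Basis.i_mul_i,
    QuaternionAlgebra.Basis.j_mul_j, QuaternionAlgebra.Basis.i_mul_j,
    QuaternionAlgebra.Basis.j_mul_i, QuaternionAlgebra.Basis.k_mul_i,
    QuaternionAlgebra.Basis.i_mul_k, QuaternionAlgebra.Basis.k_mul_j,
    QuaternionAlgebra.Basis.j_mul_k, zero_smul, add_zero, zero_sub, zero_mul,
    TensorProduct.tmul_neg, TensorProduct.tmul_smul, TensorProduct.neg_tmul, neg_smul,
    TensorProduct.tmul_add]
  simp only [Algebra.algebraMap_eq_smul_one, _root_.smul_apply, QuadraticMap.prod_apply,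
    CliffordAlgebraQuaternion.Q_apply, ← TensorProduct.smul_tmul',
    Algebra.TensorProduct.one_def, smul_smul, smul_eq_mul]
  have : l * (l * Q m) = Q m := by rw [← mul_assoc, hl2, one_mul]
  rw [this]
  module

noncomputable def fwd : CliffordAlgebra (QP Q c₁ c₂) →ₐ[ℝ]
    CliffordAlgebra (l • Q) ⊗[ℝ] ℍ[ℝ,c₁,0,c₂] :=
  CliffordAlgebra.lift _ ⟨fwdLin Q c₁ c₂ l, fwdLin_sq Q c₁ c₂ l hl hl2⟩

noncomputable def eI : CliffordAlgebra (QP Q c₁ c₂) := ι (QP Q c₁ c₂) (0, (1, 0))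
noncomputable def eJ : CliffordAlgebra (QP Q c₁ c₂) := ι (QP Q c₁ c₂) (0, (0, 1))

lemma eI_sq : eI Q c₁ c₂ * eI Q c₁ c₂ = c₁ • 1 := by
  simp [eI, Algebra.algebraMap_eq_smul_one]
lemma eJ_sq : eJ Q c₁ c₂ * eJ Q c₁ c₂ = c₂ • 1 := by
  simp [eJ, Algebra.algebraMap_eq_smul_one]
lemma eJI : eJ Q c₁ c₂ * eI Q c₁ c₂ = - (eI Q c₁ c₂ * eJ Q c₁ c₂) := by
  rw [eq_neg_iff_add_eq_zero, eI, eJ, ι_mul_ι_add_swap, QuadraticMap.polar]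
  simp
lemma eIm (m : M) : eI Q c₁ c₂ * ι (QP Q c₁ c₂) (m, 0) =
    - (ι (QP Q c₁ c₂) (m, 0) * eI Q c₁ c₂) := by
  rw [eq_neg_iff_add_eq_zero, eI, ι_mul_ι_add_swap, QuadraticMap.polar]
  simp
lemma eJm (m : M) : eJ Q c₁ c₂ * ι (QP Q c₁ c₂) (m, 0) =
    - (ι (QP Q c₁ c₂) (m, 0) * eJ Q c₁ c₂) := by
  rw [eq_neg_iff_add_eq_zero, eJ, ι_mul_ι_add_swap, QuadraticMap.polar]
  simp

noncomputable def qb : QuaternionAlgebra.Basis (CliffordAlgebra (QP Q c₁ c₂)) c₁ 0 c₂ where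
  i := eI Q c₁ c₂
  j := eJ Q c₁ c₂
  k := eI Q c₁ c₂ * eJ Q c₁ c₂
  i_mul_i := by rw [eI_sq]; simp
  j_mul_j := eJ_sq Q c₁ c₂
  i_mul_j := rfl
  j_mul_i := by rw [eJI]; simp

lemma qk_m (m : M) : (qb Q c₁ c₂).k * ι (QP Q c₁ c₂) (m, 0) =
    ι (QP Q c₁ c₂) (m, 0) * (qb Q c₁ c₂).k := by
  simp only [qb]
  rw [mul_assoc, eJm, mul_neg, ← mul_assoc, eIm, neg_mul, neg_neg, mul_assoc]

noncomputable def bwdLin : M →ₗ[ℝ] CliffordAlgebra (QP Q c₁ c₂) :=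
  l • (LinearMap.mulRight ℝ (qb Q c₁ c₂).k ∘ₗ ι (QP Q c₁ c₂) ∘ₗ LinearMap.inl ℝ M (ℝ × ℝ))

lemma bwdLin_apply (m : M) : bwdLin Q c₁ c₂ l m =
    l • (ι (QP Q c₁ c₂) (m, 0) * (qb Q c₁ c₂).k) := rfl

include hl in
lemma qk_sq : (qb Q c₁ c₂).k * (qb Q c₁ c₂).k = l • 1 := by
  rw [QuaternionAlgebra.Basis.k_mul_k, hl, neg_smul]

include hl hl2 in
lemma bwdLin_sq (m : M) : bwdLin Q c₁ c₂ l m * bwdLin Q c₁ c₂ l m =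
    algebraMap ℝ _ ((l • Q) m) := by
  rw [bwdLin_apply, smul_mul_smul_comm, hl2, one_smul, mul_assoc, ← mul_assoc (qb Q c₁ c₂).k,
    qk_m, mul_assoc, qk_sq Q c₁ c₂ l hl, ← mul_assoc, ι_sq_scalar]
  simp [Algebra.algebraMap_eq_smul_one, smul_smul]

noncomputable def bwd1 : CliffordAlgebra (l • Q) →ₐ[ℝ] CliffordAlgebra (QP Q c₁ c₂) :=
  CliffordAlgebra.lift _ ⟨bwdLin Q c₁ c₂ l, bwdLin_sq Q c₁ c₂ l hl hl2⟩

lemma bwdLin_I (m : M) : Commute (bwdLin Q c₁ c₂ l m) (eI Q c₁ c₂) := by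
  rw [bwdLin_apply]
  refine Commute.smul_left ?_ _
  simp only [qb, commute_iff_eq]
  rw [← mul_assoc (eI Q c₁ c₂), eIm, mul_assoc, mul_assoc, eJI]
  simp [mul_assoc]

lemma bwdLin_J (m : M) : Commute (bwdLin Q c₁ c₂ l m) (eJ Q c₁ c₂) := by
  rw [bwdLin_apply]
  refine Commute.smul_left ?_ _
  simp only [qb, commute_iff_eq]
  rw [← mul_assoc (eJ Q c₁ c₂), eJm, neg_mul, mul_assoc, mul_assoc, mul_assoc _ (eJ Q c₁ c₂) (_ * _), ← mul_assoc (eJ Q c₁ c₂), eJI]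
  simp [mul_assoc]

lemma bwd_comm (x : CliffordAlgebra (l • Q)) (y : ℍ[ℝ,c₁,0,c₂]) :
    Commute (bwd1 Q c₁ c₂ l hl hl2 x) ((qb Q c₁ c₂).liftHom y) := by
  have key : ∀ m, Commute (bwdLin Q c₁ c₂ l m) ((qb Q c₁ c₂).liftHom y) := by
    intro m
    simp only [QuaternionAlgebra.Basis.liftHom_apply, QuaternionAlgebra.Basis.lift]
    have hi : Commute (bwdLin Q c₁ c₂ l m) (qb Q c₁ c₂).i := bwdLin_I Q c₁ c₂ l m
    have hj : Commute (bwdLin Q c₁ c₂ l m) (qb Q c₁ c₂).j := bwdLin_J Q c₁ c₂ l m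
    have hk : Commute (bwdLin Q c₁ c₂ l m) (qb Q c₁ c₂).k := hi.mul_right hj
    have h0 : Commute (bwdLin Q c₁ c₂ l m) (algebraMap ℝ _ y.re) := (Algebra.commutes _ _).symm
    exact ((h0.add_right (hi.smul_right _)).add_right
      (hj.smul_right _)).add_right (hk.smul_right _)
  induction x using CliffordAlgebra.induction with
  | algebraMap r => rw [AlgHom.commutes]; exact Algebra.commutes _ _
  | ι m => rw [bwd1, lift_ι_apply]; exact key m
  | mul a b ha hb => rw [map_mul]; exact ha.mul_left hb
  | add a b ha hb => rw [map_add]; exact ha.add_left hb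

noncomputable def bwd : CliffordAlgebra (l • Q) ⊗[ℝ] ℍ[ℝ,c₁,0,c₂] →ₐ[ℝ]
    CliffordAlgebra (QP Q c₁ c₂) :=
  Algebra.TensorProduct.lift (bwd1 Q c₁ c₂ l hl hl2) (qb Q c₁ c₂).liftHom
    (bwd_comm Q c₁ c₂ l hl hl2)

lemma lift_i : (qb Q c₁ c₂).liftHom (bs c₁ c₂).i = eI Q c₁ c₂ := by
  simp [QuaternionAlgebra.Basis.lift, qb]
lemma lift_j : (qb Q c₁ c₂).liftHom (bs c₁ c₂).j = eJ Q c₁ c₂ := by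
  simp [QuaternionAlgebra.Basis.lift, qb]
lemma lift_k : (qb Q c₁ c₂).liftHom (bs c₁ c₂).k = (qb Q c₁ c₂).k := by
  simp [QuaternionAlgebra.Basis.lift]

lemma fwd_I : fwd Q c₁ c₂ l hl hl2 (eI Q c₁ c₂) = 1 ⊗ₜ (bs c₁ c₂).i := by
  rw [fwd, eI, lift_ι_apply, fwdLin_apply]; simp
lemma fwd_J : fwd Q c₁ c₂ l hl hl2 (eJ Q c₁ c₂) = 1 ⊗ₜ (bs c₁ c₂).j := by
  rw [fwd, eJ, lift_ι_apply, fwdLin_apply]; simp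
lemma fwd_m (m : M) : fwd Q c₁ c₂ l hl hl2 (ι _ (m, 0)) = ι _ m ⊗ₜ (bs c₁ c₂).k := by
  rw [fwd, lift_ι_apply]
  exact (fwdLin_apply Q c₁ c₂ l m 0 0).trans (by simp)

noncomputable def tensEquiv : CliffordAlgebra (QP Q c₁ c₂) ≃ₐ[ℝ]
    CliffordAlgebra (l • Q) ⊗[ℝ] ℍ[ℝ,c₁,0,c₂] :=
  AlgEquiv.ofAlgHom (fwd Q c₁ c₂ l hl hl2) (bwd Q c₁ c₂ l hl hl2)
    (by
      apply Algebra.TensorProduct.ext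
      · apply CliffordAlgebra.hom_ext
        ext m
        simp only [bwd, LinearMap.comp_apply, AlgHom.toLinearMap_apply, AlgHom.comp_apply,
          Algebra.TensorProduct.includeLeft_apply, Algebra.TensorProduct.lift_tmul, map_one,
          mul_one, AlgHom.id_apply, bwd1, lift_ι_apply, bwdLin_apply, map_smul, map_mul, fwd_m]
        simp only [qb, map_mul, fwd_I, fwd_J, Algebra.TensorProduct.tmul_mul_tmul, mul_one,
          QuaternionAlgebra.Basis.i_mul_j, QuaternionAlgebra.Basis.k_mul_k, ← neg_smul, ← hl,
          TensorProduct.tmul_smul, smul_smul, hl2, one_smul]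
      · apply QuaternionAlgebra.hom_ext
        · change fwd Q c₁ c₂ l hl hl2 (bwd Q c₁ c₂ l hl hl2 (1 ⊗ₜ (bs c₁ c₂).i)) = 1 ⊗ₜ (bs c₁ c₂).i
          rw [bwd, Algebra.TensorProduct.lift_tmul, lift_i, map_one, one_mul, fwd_I]
        · change fwd Q c₁ c₂ l hl hl2 (bwd Q c₁ c₂ l hl hl2 (1 ⊗ₜ (bs c₁ c₂).j)) = 1 ⊗ₜ (bs c₁ c₂).j
          rw [bwd, Algebra.TensorProduct.lift_tmul, lift_j, map_one, one_mul, fwd_J])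
    (by
      apply CliffordAlgebra.hom_ext
      apply LinearMap.ext
      rintro ⟨m, x, y⟩
      have h : ((m, (x, y)) : M × (ℝ × ℝ)) = (m, 0) + x • (0, (1, 0)) + y • (0, (0, 1)) := by
        simp
      rw [h]
      simp only [map_add, map_smul, LinearMap.comp_apply, AlgHom.toLinearMap_apply,
        AlgHom.comp_apply, AlgHom.id_apply]
      congr 1
      · congr 1
        · rw [fwd_m, bwd, Algebra.TensorProduct.lift_tmul, lift_k, bwd1, lift_ι_apply,
            bwdLin_apply, smul_mul_assoc, mul_assoc, qk_sq Q c₁ c₂ l hl, mul_smul_comm, mul_one,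
            smul_smul, hl2, one_smul]
        · change x • bwd Q c₁ c₂ l hl hl2 (fwd Q c₁ c₂ l hl hl2 (eI Q c₁ c₂)) = x • eI Q c₁ c₂
          rw [fwd_I, bwd, Algebra.TensorProduct.lift_tmul, lift_i, map_one, one_mul]
      · change y • bwd Q c₁ c₂ l hl hl2 (fwd Q c₁ c₂ l hl hl2 (eJ Q c₁ c₂)) = y • eJ Q c₁ c₂
        rw [fwd_J, bwd, Algebra.TensorProduct.lift_tmul, lift_j, map_one, one_mul])
end tens

/-- split quaternions are matrices -/
noncomputable def splitBasis (c : ℝ) :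
    QuaternionAlgebra.Basis (Matrix (Fin 2) (Fin 2) ℝ) 1 0 c where
  i := !![1, 0; 0, -1]
  j := !![0, 1; c, 0]
  k := !![0, 1; -c, 0]
  i_mul_i := by ext a b; fin_cases a <;> fin_cases b <;> simp
  j_mul_j := by ext a b; fin_cases a <;> fin_cases b <;> simp
  i_mul_j := by ext a b; fin_cases a <;> fin_cases b <;> simp
  j_mul_i := by ext a b; fin_cases a <;> fin_cases b <;> simp

noncomputable def splitEquiv (c : ℝ) (hc : c * c = 1) :
    ℍ[ℝ,1,0,c] ≃ₐ[ℝ] Matrix (Fin 2) (Fin 2) ℝ :=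
  { (splitBasis c).liftHom with
    invFun := fun A => ⟨(A 0 0 + A 1 1) / 2, (A 0 0 - A 1 1) / 2, (A 0 1 + c * A 1 0) / 2,
      (A 0 1 - c * A 1 0) / 2⟩
    left_inv := by
      rintro ⟨x, y, z, w⟩
      ext <;> simp [splitBasis, QuaternionAlgebra.Basis.lift, Matrix.algebraMap_eq_diagonal] <;> grind
    right_inv := by
      intro A
      ext a b
      fin_cases a <;> fin_cases b <;> simp [splitBasis, QuaternionAlgebra.Basis.lift, Matrix.algebraMap_eq_diagonal] <;> grind }


noncomputable def Sq (p : ℕ) : QuadraticForm ℝ (Fin p → ℝ) :=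
  QuadraticMap.weightedSumSquares ℝ (fun _ => (1 : ℝ))

lemma Sq_apply (p : ℕ) (x : Fin p → ℝ) : Sq p x = ∑ i, x i * x i := by
  simp [Sq, QuadraticMap.weightedSumSquares_apply]

noncomputable def T (p q : ℕ) : QuadraticForm ℝ ((Fin p → ℝ) × (Fin q → ℝ)) :=
  (Sq p).prod (-(Sq q))

lemma T_apply (p q : ℕ) (x : Fin p → ℝ) (y : Fin q → ℝ) :
    T p q (x, y) = ∑ i, x i * x i - ∑ i, y i * y i := by
  simp [T, Sq_apply, sub_eq_add_neg]

noncomputable def isoQ (p q : ℕ) : (Qpq p q).IsometryEquiv (T p q) :=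
  { (LinearEquiv.funCongrLeft ℝ ℝ finSumFinEquiv).trans
      (LinearEquiv.sumArrowLequivProdArrow (Fin p) (Fin q) ℝ ℝ) with
    map_app' := by
      intro x
      change T p q (fun i => x (Fin.castAdd q i), fun i => x (Fin.natAdd p i)) = _
      rw [T_apply, Qpq, QuadraticMap.weightedSumSquares_apply, Fin.sum_univ_add]
      simp [sub_eq_add_neg] }

noncomputable def isoPM (p q : ℕ) :
    (QP (T p q) 1 (-1)).IsometryEquiv (T (p + 1) (q + 1)) :=
  { toFun := fun v => (Fin.cons v.2.1 v.1.1, Fin.cons v.2.2 v.1.2)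
    invFun := fun v => ((Fin.tail v.1, Fin.tail v.2), (v.1 0, v.2 0))
    left_inv := by rintro ⟨⟨x, y⟩, a, b⟩; simp
    right_inv := by rintro ⟨x, y⟩; simp
    map_add' := by
      rintro ⟨⟨x, y⟩, a, b⟩ ⟨⟨x', y'⟩, a', b'⟩
      ext i <;> refine Fin.cases ?_ (fun i => ?_) i <;> simp
    map_smul' := by
      rintro r ⟨⟨x, y⟩, a, b⟩
      ext i <;> refine Fin.cases ?_ (fun i => ?_) i <;> simp
    map_app' := by
      rintro ⟨⟨x, y⟩, a, b⟩
      simp [T_apply, Fin.sum_univ_succ]; ring }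

noncomputable def isoPP (p q : ℕ) :
    (QP (T p q) 1 1).IsometryEquiv (T (p + 2) q) :=
  { toFun := fun v => (Fin.cons v.2.1 (Fin.cons v.2.2 v.1.1 : Fin (p + 1) → ℝ), v.1.2)
    invFun := fun v => ((Fin.tail (Fin.tail v.1 : Fin (p + 1) → ℝ), v.2), (v.1 0, v.1 1))
    left_inv := by rintro ⟨⟨x, y⟩, a, b⟩; simp
    right_inv := by
      rintro ⟨x, y⟩
      ext i
      · refine Fin.cases ?_ (fun i => ?_) i
        · simp
        · refine Fin.cases ?_ (fun i => ?_) i <;> simp [Fin.tail]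
      · simp
    map_add' := by
      rintro ⟨⟨x, y⟩, a, b⟩ ⟨⟨x', y'⟩, a', b'⟩
      ext i
      · refine Fin.cases ?_ (fun i => ?_) i
        · simp
        · refine Fin.cases ?_ (fun i => ?_) i <;> simp
      · simp
    map_smul' := by
      rintro r ⟨⟨x, y⟩, a, b⟩
      ext i
      · refine Fin.cases ?_ (fun i => ?_) i
        · simp
        · refine Fin.cases ?_ (fun i => ?_) i <;> simp
      · simp
    map_app' := by
      rintro ⟨⟨x, y⟩, a, b⟩
      simp [T_apply, Fin.sum_univ_succ]; ring }

noncomputable def isoNeg (p q : ℕ) : ((-1 : ℝ) • T p q).IsometryEquiv (T q p) :=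
  { LinearEquiv.prodComm ℝ _ _ with
    map_app' := by
      rintro ⟨x, y⟩
      change T q p (y, x) = _
      simp [T_apply] }

noncomputable def isoMM (p q : ℕ) :
    (QP (T p q) (-1) (-1)).IsometryEquiv (T p (q + 2)) :=
  { (isoPP q p).toLinearEquiv.trans (LinearEquiv.prodComm ℝ _ _) with
    toFun := fun v => ((isoPP q p ((v.1.2, v.1.1), v.2)).2, (isoPP q p ((v.1.2, v.1.1), v.2)).1)
    invFun := fun v => ((((isoPP q p).symm (v.2, v.1)).1.2, ((isoPP q p).symm (v.2, v.1)).1.1),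
      ((isoPP q p).symm (v.2, v.1)).2)
    left_inv := by
      rintro ⟨⟨x, y⟩, a, b⟩
      have := (isoPP q p).toLinearEquiv.symm_apply_apply ((y, x), a, b)
      change (isoPP q p).symm (isoPP q p ((y, x), a, b)) = _ at this
      simp [this]
    right_inv := by
      rintro ⟨x, y⟩
      have := (isoPP q p).toLinearEquiv.apply_symm_apply (y, x)
      change (isoPP q p) ((isoPP q p).symm (y, x)) = _ at this
      simp [this]
    map_add' := by
      intro v w
      have := map_add (isoPP q p) ((v.1.2, v.1.1), v.2) ((w.1.2, w.1.1), w.2)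
      simp only [Prod.mk_add_mk] at this
      simp [this]
    map_smul' := by
      intro r v
      have := map_smul (isoPP q p) r ((v.1.2, v.1.1), v.2)
      simp only [Prod.smul_mk] at this
      simp [this]
    map_app' := by
      intro v
      have := (isoPP q p).map_app ((v.1.2, v.1.1), v.2)
      generalize (isoPP q p ((v.1.2, v.1.1), v.2)) = u at this
      obtain ⟨⟨x, y⟩, a, b⟩ := v
      obtain ⟨u1, u2⟩ := u
      simp [T_apply] at this ⊢
      linarith }

abbrev M2 := Matrix (Fin 2) (Fin 2) ℝ
abbrev CT (p q : ℕ) := CliffordAlgebra (T p q)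

noncomputable def equivQ (p q : ℕ) : Cl p q ≃ₐ[ℝ] CT p q := equivOfIsometry (isoQ p q)

noncomputable def rulePM (p q : ℕ) : CT (p + 1) (q + 1) ≃ₐ[ℝ] CT p q ⊗[ℝ] M2 :=
  (equivOfIsometry (isoPM p q)).symm.trans <|
    (tensEquiv (T p q) 1 (-1) 1 (by norm_num) (by norm_num)).trans <|
      Algebra.TensorProduct.congr
        (equivOfIsometry
          { LinearEquiv.refl ℝ _ with map_app' := by intro x; simp })
        (splitEquiv (-1) (by norm_num))

noncomputable def rulePP (p q : ℕ) : CT (p + 2) q ≃ₐ[ℝ] CT q p ⊗[ℝ] M2 :=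
  (equivOfIsometry (isoPP p q)).symm.trans <|
    (tensEquiv (T p q) 1 1 (-1) (by norm_num) (by norm_num)).trans <|
      Algebra.TensorProduct.congr (equivOfIsometry (isoNeg p q)) (splitEquiv 1 (by norm_num))

noncomputable def ruleMM (p q : ℕ) : CT p (q + 2) ≃ₐ[ℝ] CT q p ⊗[ℝ] ℍ[ℝ] :=
  (equivOfIsometry (isoMM p q)).symm.trans <|
    (tensEquiv (T p q) (-1) (-1) (-1) (by norm_num) (by norm_num)).trans <|
      Algebra.TensorProduct.congr (equivOfIsometry (isoNeg p q)) AlgEquiv.refl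

noncomputable def e00 : CT 0 0 ≃ₐ[ℝ] ℝ :=
  (equivOfIsometry (Q₁ := T 0 0) (Q₂ := (0 : QuadraticForm ℝ Unit))
    { toFun := fun _ => (), invFun := fun _ => 0, left_inv := fun _ => Subsingleton.elim _ _,
      right_inv := fun _ => rfl, map_add' := fun _ _ => rfl, map_smul' := fun _ _ => rfl,
      map_app' := by rintro ⟨x, y⟩; simp [T_apply] }).trans CliffordAlgebraRing.equiv

noncomputable def e01 : CT 0 1 ≃ₐ[ℝ] ℂ :=
  (equivOfIsometry (Q₁ := T 0 1) (Q₂ := CliffordAlgebraComplex.Q)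
    { toFun := fun v => v.2 0, invFun := fun r => (0, fun _ => r),
      left_inv := by
        rintro ⟨x, y⟩
        ext i
        · exact i.elim0
        · rw [Subsingleton.elim i 0]
      right_inv := fun _ => rfl, map_add' := fun _ _ => rfl, map_smul' := fun _ _ => rfl,
      map_app' := by rintro ⟨x, y⟩; simp [T_apply] }).trans CliffordAlgebraComplex.equiv

noncomputable def f10 : CT 1 0 →ₐ[ℝ] ℝ × ℝ :=
  CliffordAlgebra.lift _ ⟨
    { toFun := fun v => (v.1 0, - v.1 0)
      map_add' := by intro a b; ext <;> simp; ring
      map_smul' := by intro r a; ext <;> simp },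
    by rintro ⟨x, y⟩; ext <;> simp [T_apply]⟩

noncomputable def g1 : CT 1 0 := ι (T 1 0) (fun _ => 1, 0)
lemma g1_sq : g1 * g1 = 1 := by simp [g1, T_apply]
lemma f10_g1 : f10 g1 = (1, -1) := by
  rw [f10, g1, lift_ι_apply]; simp

noncomputable def b10 : ℝ × ℝ →ₐ[ℝ] CT 1 0 :=
  AlgHom.ofLinearMap
    (LinearMap.coprod (LinearMap.toSpanSingleton ℝ _ ((1 / 2 : ℝ) • (1 + g1)))
      (LinearMap.toSpanSingleton ℝ _ ((1 / 2 : ℝ) • (1 - g1))))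
    (by simp only [Prod.one_eq_mk, LinearMap.coprod_apply, LinearMap.toSpanSingleton_apply]; module)
    (by
      rintro ⟨a, b⟩ ⟨c, d⟩
      simp only [Prod.mk_mul_mk, LinearMap.coprod_apply, LinearMap.toSpanSingleton_apply]
      simp only [smul_smul, mul_add, add_mul, mul_sub, sub_mul, smul_mul_smul_comm, smul_add,
        smul_sub, mul_one, one_mul, g1_sq]
      module)

lemma b10_apply (a b : ℝ) : b10 (a, b) =
  a • ((1 / 2 : ℝ) • (1 + g1)) + b • ((1 / 2 : ℝ) • (1 - g1)) := rfl

noncomputable def e10 : CT 1 0 ≃ₐ[ℝ] ℝ × ℝ :=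
  AlgEquiv.ofAlgHom f10 b10
    (by
      apply AlgHom.ext
      rintro ⟨a, b⟩
      rw [AlgHom.comp_apply, b10_apply]
      simp only [map_add, map_smul, map_sub, map_one, f10_g1]
      ext <;> simp <;> ring)
    (by
      apply CliffordAlgebra.hom_ext
      apply LinearMap.ext
      rintro ⟨x, y⟩
      have h : ((x, y) : (Fin 1 → ℝ) × (Fin 0 → ℝ)) = x 0 • (fun _ => 1, 0) := by
        ext i
        · rw [Subsingleton.elim i 0]; simp
        · exact i.elim0
      rw [h, map_smul, map_smul]
      congr 1
      change b10 (f10 g1) = g1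
      rw [f10_g1, b10_apply]
      module)

abbrev Mat (k : ℕ) (A : Type) := Matrix (Fin (2 ^ k)) (Fin (2 ^ k)) A

section mats
variable (A B C : Type) [Ring A] [Algebra ℝ A] [Ring B] [Algebra ℝ B] [Ring C] [Algebra ℝ C]

noncomputable def matMat (k j : ℕ) : Mat k (Mat j A) ≃ₐ[ℝ] Mat (k + j) A :=
  (Matrix.compAlgEquiv _ _ A ℝ).trans
    (Matrix.reindexAlgEquiv ℝ A (finProdFinEquiv.trans (finCongr (pow_add 2 k j).symm)))

noncomputable def tensM2 : A ⊗[ℝ] M2 ≃ₐ[ℝ] Mat 1 A := (matrixEquivTensor (Fin 2) ℝ A).symm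

noncomputable def matTensM2 (k : ℕ) : Mat k A ⊗[ℝ] M2 ≃ₐ[ℝ] Mat (k + 1) A :=
  (tensM2 (Mat k A)).trans <| (matMat A 1 k).trans
    (Matrix.reindexAlgEquiv ℝ A (finCongr (by rw [add_comm])))

noncomputable def matTens (k : ℕ) : Mat k A ⊗[ℝ] B ≃ₐ[ℝ] Mat k (A ⊗[ℝ] B) :=
  (Algebra.TensorProduct.congr (matrixEquivTensor (Fin (2 ^ k)) ℝ A) AlgEquiv.refl).trans <|
    (Algebra.TensorProduct.assoc ℝ ℝ ℝ A (Mat k ℝ) B).trans <|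
    (Algebra.TensorProduct.congr AlgEquiv.refl (Algebra.TensorProduct.comm ℝ _ _)).trans <|
    (Algebra.TensorProduct.assoc ℝ ℝ ℝ A B (Mat k ℝ)).symm.trans
      (matrixEquivTensor (Fin (2 ^ k)) ℝ (A ⊗[ℝ] B)).symm

noncomputable def prodTens : (A × B) ⊗[ℝ] C ≃ₐ[ℝ] (A ⊗[ℝ] C) × (B ⊗[ℝ] C) :=
  (Algebra.TensorProduct.comm ℝ _ _).trans <|
    (Algebra.TensorProduct.prodRight ℝ ℝ C A B).trans <|
      AlgEquiv.prodCongr (Algebra.TensorProduct.comm ℝ _ _) (Algebra.TensorProduct.comm ℝ _ _)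

noncomputable def mat0' : A ≃ₐ[ℝ] Matrix (Fin 1) (Fin 1) A where
  toFun a := Matrix.of fun _ _ => a
  invFun m := m 0 0
  left_inv _ := rfl
  right_inv m := by ext i j; rw [Subsingleton.elim i 0, Subsingleton.elim j 0]; rfl
  map_mul' a b := by ext i j; simp [Matrix.mul_apply]
  map_add' a b := rfl
  commutes' r := by ext i j; simp [Matrix.algebraMap_matrix_apply, Subsingleton.elim i j]

noncomputable def mat0 : A ≃ₐ[ℝ] Mat 0 A := mat0' A
end mats

noncomputable def CH : ℂ ⊗[ℝ] ℍ[ℝ] ≃ₐ[ℝ] Mat 1 ℂ :=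
  (Algebra.TensorProduct.congr e01.symm AlgEquiv.refl).trans <|
    (ruleMM 1 0).symm.trans <| (rulePM 0 1).trans <|
      (Algebra.TensorProduct.congr e01 AlgEquiv.refl).trans (tensM2 ℂ)

noncomputable def H02 : CT 0 2 ≃ₐ[ℝ] ℍ[ℝ] :=
  (ruleMM 0 0).trans <| (Algebra.TensorProduct.congr e00 AlgEquiv.refl).trans
    (Algebra.TensorProduct.lid ℝ _)

noncomputable def m00 : CT 0 0 ≃ₐ[ℝ] Mat 0 ℝ :=
  e00.trans (mat0 ℝ)

noncomputable def HH : ℍ[ℝ] ⊗[ℝ] ℍ[ℝ] ≃ₐ[ℝ] Mat 2 ℝ :=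
  (Algebra.TensorProduct.congr H02.symm AlgEquiv.refl).trans <|
    (ruleMM 2 0).symm.trans <| (rulePM 1 1).trans <|
      (Algebra.TensorProduct.congr ((rulePM 0 0).trans
        ((Algebra.TensorProduct.congr m00 AlgEquiv.refl).trans (matTensM2 ℝ 0)))
        AlgEquiv.refl).trans (matTensM2 ℝ 1)

def IsM (X : Type) [Ring X] [Algebra ℝ X] (k : ℕ) (A : Type) [Ring A] [Algebra ℝ A] : Prop :=
  Nonempty (A ≃ₐ[ℝ] Mat k X)
def IsMM (X : Type) [Ring X] [Algebra ℝ X] (k : ℕ) (A : Type) [Ring A] [Algebra ℝ A] : Prop :=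
  Nonempty (A ≃ₐ[ℝ] Mat k X × Mat k X)

section preds
variable {X Y A B : Type} [Ring X] [Algebra ℝ X] [Ring Y] [Algebra ℝ Y] [Ring A] [Algebra ℝ A]
  [Ring B] [Algebra ℝ B] {k j : ℕ}

lemma IsM.m2 (h : IsM X k A) (e : B ≃ₐ[ℝ] A ⊗[ℝ] M2) : IsM X (k + 1) B := by
  obtain ⟨f⟩ := h
  exact ⟨e.trans <| (Algebra.TensorProduct.congr f AlgEquiv.refl).trans (matTensM2 X k)⟩

lemma IsMM.m2 (h : IsMM X k A) (e : B ≃ₐ[ℝ] A ⊗[ℝ] M2) : IsMM X (k + 1) B := by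
  obtain ⟨f⟩ := h
  exact ⟨e.trans <| (Algebra.TensorProduct.congr f AlgEquiv.refl).trans <|
    (prodTens _ _ _).trans (AlgEquiv.prodCongr (matTensM2 X k) (matTensM2 X k))⟩

lemma IsM.h (g : X ⊗[ℝ] ℍ[ℝ] ≃ₐ[ℝ] Mat j Y) (h : IsM X k A) (e : B ≃ₐ[ℝ] A ⊗[ℝ] ℍ[ℝ]) :
    IsM Y (k + j) B := by
  obtain ⟨f⟩ := h
  exact ⟨e.trans <| (Algebra.TensorProduct.congr f AlgEquiv.refl).trans <|
    (matTens X _ k).trans <| g.mapMatrix.trans (matMat Y k j)⟩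

lemma IsMM.h (g : X ⊗[ℝ] ℍ[ℝ] ≃ₐ[ℝ] Mat j Y) (h : IsMM X k A) (e : B ≃ₐ[ℝ] A ⊗[ℝ] ℍ[ℝ]) :
    IsMM Y (k + j) B := by
  obtain ⟨f⟩ := h
  let u := (matTens X ℍ[ℝ] k).trans <| g.mapMatrix.trans (matMat Y k j)
  exact ⟨e.trans <| (Algebra.TensorProduct.congr f AlgEquiv.refl).trans <|
    (prodTens _ _ _).trans (AlgEquiv.prodCongr u u)⟩
end preds

noncomputable def RH : ℝ ⊗[ℝ] ℍ[ℝ] ≃ₐ[ℝ] Mat 0 ℍ[ℝ] :=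
  (Algebra.TensorProduct.lid ℝ ℍ[ℝ]).trans (mat0 ℍ[ℝ])

structure Good (p q : ℕ) : Prop where
  r : ∀ k, (((p : ℤ) - q) % 8 = 0 ∨ ((p : ℤ) - q) % 8 = 2) → p + q = 2 * k → IsM ℝ k (CT p q)
  rr : ∀ k, ((p : ℤ) - q) % 8 = 1 → p + q = 2 * k + 1 → IsMM ℝ k (CT p q)
  c : ∀ k, (((p : ℤ) - q) % 8 = 3 ∨ ((p : ℤ) - q) % 8 = 7) → p + q = 2 * k + 1 → IsM ℂ k (CT p q)
  h : ∀ k, (((p : ℤ) - q) % 8 = 4 ∨ ((p : ℤ) - q) % 8 = 6) → p + q = 2 * k + 2 →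
    IsM ℍ[ℝ] k (CT p q)
  hh : ∀ k, ((p : ℤ) - q) % 8 = 5 → p + q = 2 * k + 3 → IsMM ℍ[ℝ] k (CT p q)

lemma good_pm {p q : ℕ} (g : Good p q) : Good (p + 1) (q + 1) where
  r k h1 h2 := by
    obtain ⟨k, rfl⟩ : ∃ j, k = j + 1 := ⟨k - 1, by omega⟩
    exact (g.r k (by omega) (by omega)).m2 (rulePM p q)
  rr k h1 h2 := by
    obtain ⟨k, rfl⟩ : ∃ j, k = j + 1 := ⟨k - 1, by omega⟩
    exact (g.rr k (by omega) (by omega)).m2 (rulePM p q)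
  c k h1 h2 := by
    obtain ⟨k, rfl⟩ : ∃ j, k = j + 1 := ⟨k - 1, by omega⟩
    exact (g.c k (by omega) (by omega)).m2 (rulePM p q)
  h k h1 h2 := by
    obtain ⟨k, rfl⟩ : ∃ j, k = j + 1 := ⟨k - 1, by omega⟩
    exact (g.h k (by omega) (by omega)).m2 (rulePM p q)
  hh k h1 h2 := by
    obtain ⟨k, rfl⟩ : ∃ j, k = j + 1 := ⟨k - 1, by omega⟩
    exact (g.hh k (by omega) (by omega)).m2 (rulePM p q)

lemma good_pp {p q : ℕ} (g : Good q p) : Good (p + 2) q where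
  r k h1 h2 := by
    obtain ⟨k, rfl⟩ : ∃ j, k = j + 1 := ⟨k - 1, by omega⟩
    exact (g.r k (by omega) (by omega)).m2 (rulePP p q)
  rr k h1 h2 := by
    obtain ⟨k, rfl⟩ : ∃ j, k = j + 1 := ⟨k - 1, by omega⟩
    exact (g.rr k (by omega) (by omega)).m2 (rulePP p q)
  c k h1 h2 := by
    obtain ⟨k, rfl⟩ : ∃ j, k = j + 1 := ⟨k - 1, by omega⟩
    exact (g.c k (by omega) (by omega)).m2 (rulePP p q)
  h k h1 h2 := by
    obtain ⟨k, rfl⟩ : ∃ j, k = j + 1 := ⟨k - 1, by omega⟩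
    exact (g.h k (by omega) (by omega)).m2 (rulePP p q)
  hh k h1 h2 := by
    obtain ⟨k, rfl⟩ : ∃ j, k = j + 1 := ⟨k - 1, by omega⟩
    exact (g.hh k (by omega) (by omega)).m2 (rulePP p q)

lemma good_mm {p q : ℕ} (g : Good q p) : Good p (q + 2) where
  r k h1 h2 := by
    obtain ⟨k, rfl⟩ : ∃ j, k = j + 2 := ⟨k - 2, by omega⟩
    exact (g.h k (by omega) (by omega)).h HH (ruleMM p q)
  rr k h1 h2 := by
    obtain ⟨k, rfl⟩ : ∃ j, k = j + 2 := ⟨k - 2, by omega⟩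
    exact (g.hh k (by omega) (by omega)).h HH (ruleMM p q)
  c k h1 h2 := by
    obtain ⟨k, rfl⟩ : ∃ j, k = j + 1 := ⟨k - 1, by omega⟩
    exact (g.c k (by omega) (by omega)).h CH (ruleMM p q)
  h k h1 h2 := (g.r k (by omega) (by omega)).h RH (ruleMM p q)
  hh k h1 h2 := (g.rr k (by omega) (by omega)).h RH (ruleMM p q)

lemma good_all (n : ℕ) : ∀ p q : ℕ, p + q = n → Good p q := by
  induction n using Nat.strong_induction_on with
  | _ n ih =>
    intro p q hn
    match p, q, hn with
    | p + 1, q + 1, hn => exact good_pm (ih (p + q) (by omega) p q rfl)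
    | p + 2, 0, hn => exact good_pp (ih (0 + p) (by omega) 0 p rfl)
    | 0, q + 2, hn => exact good_mm (ih (q + 0) (by omega) q 0 rfl)
    | 0, 0, hn =>
      refine ⟨fun k _ hk => ?_, fun k h => by norm_num at h, fun k h => by norm_num at h,
        fun k h => by norm_num at h, fun k h => by norm_num at h⟩
      obtain rfl : k = 0 := by omega
      exact ⟨m00⟩
    | 1, 0, hn =>
      refine ⟨fun k h => by norm_num at h, fun k _ hk => ?_, fun k h => by norm_num at h,
        fun k h => by norm_num at h, fun k h => by norm_num at h⟩
      obtain rfl : k = 0 := by omega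
      let u := (mat0 ℝ)
      exact ⟨e10.trans (AlgEquiv.prodCongr u u)⟩
    | 0, 1, hn =>
      refine ⟨fun k h => by norm_num at h, fun k h => by norm_num at h, fun k _ hk => ?_,
        fun k h => by norm_num at h, fun k h => by norm_num at h⟩
      obtain rfl : k = 0 := by omega
      exact ⟨e01.trans (mat0 ℂ)⟩
end CartanAux

/-- Cartan's classification of the real Clifford algebras `Cl_{p,q}` (n = p + q),
according to `p − q mod 8`. -/
theorem cartan_classification (p q : ℕ) (n : ℕ) (hn : n = p + q) :
    ((((p : ℤ) - q) % 8 = 0 ∨ ((p : ℤ) - q) % 8 = 2 →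
      Nonempty (Cl p q ≃ₐ[ℝ]
        Matrix (Fin (2 ^ (n / 2))) (Fin (2 ^ (n / 2))) ℝ))) ∧
    ((((p : ℤ) - q) % 8 = 1 →
      Nonempty (Cl p q ≃ₐ[ℝ]
        (Matrix (Fin (2 ^ ((n - 1) / 2))) (Fin (2 ^ ((n - 1) / 2))) ℝ ×
         Matrix (Fin (2 ^ ((n - 1) / 2))) (Fin (2 ^ ((n - 1) / 2))) ℝ)))) ∧
    ((((p : ℤ) - q) % 8 = 3 ∨ ((p : ℤ) - q) % 8 = 7 →
      Nonempty (Cl p q ≃ₐ[ℝ]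
        Matrix (Fin (2 ^ ((n - 1) / 2))) (Fin (2 ^ ((n - 1) / 2))) ℂ))) ∧
    ((((p : ℤ) - q) % 8 = 4 ∨ ((p : ℤ) - q) % 8 = 6 →
      Nonempty (Cl p q ≃ₐ[ℝ]
        Matrix (Fin (2 ^ ((n - 2) / 2))) (Fin (2 ^ ((n - 2) / 2))) (Quaternion ℝ)))) ∧
    ((((p : ℤ) - q) % 8 = 5 →
      Nonempty (Cl p q ≃ₐ[ℝ]
        (Matrix (Fin (2 ^ ((n - 3) / 2))) (Fin (2 ^ ((n - 3) / 2))) (Quaternion ℝ) ×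
         Matrix (Fin (2 ^ ((n - 3) / 2))) (Fin (2 ^ ((n - 3) / 2))) (Quaternion ℝ))))) := by
  subst hn
  have g := CartanAux.good_all _ p q rfl
  refine ⟨fun h => ?_, fun h => ?_, fun h => ?_, fun h => ?_, fun h => ?_⟩
  · obtain ⟨e⟩ := g.r ((p + q) / 2) h (by omega)
    exact ⟨(CartanAux.equivQ p q).trans e⟩
  · obtain ⟨e⟩ := g.rr ((p + q - 1) / 2) h (by omega)
    exact ⟨(CartanAux.equivQ p q).trans e⟩
  · obtain ⟨e⟩ := g.c ((p + q - 1) / 2) h (by omega)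
    exact ⟨(CartanAux.equivQ p q).trans e⟩
  · obtain ⟨e⟩ := g.h ((p + q - 2) / 2) h (by omega)
    exact ⟨(CartanAux.equivQ p q).trans e⟩
  · obtain ⟨e⟩ := g.hh ((p + q - 3) / 2) h (by omega)
    exact ⟨(CartanAux.equivQ p q).trans e⟩
end

section
/- Let n = p + q. For an ordered multi-index A = {a₁ < ⋯ < a_k} ⊆ {1,…,n} set e_A := e_{a₁}⋯e_{a_k} (with e_∅ := e). Every e_A satisfies (e_A)² = +e or (e_A)² = −e. Let P be the number of subsets A ⊆ {1,…,n} with (e_A)² = e and let Q be the number with (e_A)² = −e. Then P = 2^{(n−1)/2}·(2^{(n−1)/2} + sin(π(p−q+1)/4)) and Q = 2^{(n−1)/2}·(2^{(n−1)/2} − sin(π(p−q+1)/4)); equivalently, P − Q = 2^{(n+1)/2}·sin(π(p−q+1)/4) and P + Q = 2^n. -/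
open CliffordAlgebra

/-- The basis element `e_A` of `Cl_{p,q}` attached to an ordered multi-index `A`:
the product of the generators with indices in `A`, in increasing order (`e_∅ = 1`). -/
noncomputable def basisEl (p q : ℕ) (A : Finset (Fin (p + q))) : Cl p q :=
  ((A.sort (· ≤ ·)).map (gen p q)).prod


open Real

noncomputable def sgnEta (p q : ℕ) (i : Fin (p + q)) : ℝ := if (i : ℕ) < p then (1 : ℝ) else -1

theorem gen_sq (p q : ℕ) (i : Fin (p + q)) :
    gen p q i * gen p q i = algebraMap ℝ _ (sgnEta p q i) := by
  unfold gen
  rw [ι_sq_scalar]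
  congr 1
  rw [Qpq, QuadraticMap.weightedSumSquares_apply, Finset.sum_eq_single i]
  · simp [sgnEta]
  · intro b _ hb
    simp [hb]
  · simp

theorem gen_anti (p q : ℕ) (i j : Fin (p + q)) (h : i ≠ j) :
    gen p q i * gen p q j = - (gen p q j * gen p q i) := by
  unfold gen
  rw [ι_mul_ι_comm]
  have : QuadraticMap.polar (Qpq p q) (Pi.single i 1) (Pi.single j 1) = 0 := by
    simp only [QuadraticMap.polar, Qpq, QuadraticMap.weightedSumSquares_apply,
      ← Finset.sum_sub_distrib]
    apply Finset.sum_eq_zero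
    intro k _
    by_cases h1 : k = i
    · subst h1
      simp [Pi.single_apply, h]
    · simp [Pi.single_apply, h1]
  rw [this]
  simp

theorem list_comm (p q : ℕ) (a : Fin (p + q)) (l : List (Fin (p + q))) (h : a ∉ l) :
    (l.map (gen p q)).prod * gen p q a
      = algebraMap ℝ _ ((-1) ^ l.length) * (gen p q a * (l.map (gen p q)).prod) := by
  induction l with
  | nil => simp
  | cons b l ih =>
    simp only [List.mem_cons, not_or] at h
    rw [List.map_cons, List.prod_cons, mul_assoc, ih h.2, Algebra.left_comm,
      ← mul_assoc (gen p q b), gen_anti p q b a (Ne.symm h.1), List.length_cons, pow_succ]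
    simp [mul_assoc]

theorem list_sq (p q : ℕ) (l : List (Fin (p + q))) (h : l.Nodup) :
    (l.map (gen p q)).prod * (l.map (gen p q)).prod
      = algebraMap ℝ _ ((-1) ^ (l.length.choose 2) * (l.map (sgnEta p q)).prod) := by
  induction l with
  | nil => simp
  | cons a l ih =>
    rw [List.nodup_cons] at h
    rw [List.map_cons, List.prod_cons, mul_assoc, ← mul_assoc _ (gen p q a),
      list_comm p q a l h.1, mul_assoc, mul_assoc, ih h.2, Algebra.left_comm,
      ← mul_assoc, ← mul_assoc, mul_assoc (algebraMap ℝ _ _), gen_sq, ← map_mul, ← map_mul]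
    congr 1
    rw [List.length_cons, Nat.choose_succ_succ' _ 1, pow_add]
    simp
    ring

noncomputable def sgnA (p q : ℕ) (A : Finset (Fin (p + q))) : ℝ :=
  (-1) ^ (A.card.choose 2) * ∏ i ∈ A, sgnEta p q i

theorem basisEl_sq (p q : ℕ) (A : Finset (Fin (p + q))) :
    basisEl p q A * basisEl p q A = algebraMap ℝ _ (sgnA p q A) := by
  unfold basisEl
  rw [list_sq p q _ (Finset.sort_nodup _ _), sgnA, Finset.length_sort]
  congr 2
  rw [← List.prod_toFinset _ (Finset.sort_nodup _ _), Finset.sort_toFinset]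

theorem sgnA_or (p q : ℕ) (A : Finset (Fin (p + q))) : sgnA p q A = 1 ∨ sgnA p q A = -1 := by
  rw [← sq_eq_one_iff, sgnA, mul_pow, ← Finset.prod_pow, ← pow_mul, mul_comm _ 2, pow_mul]
  have : ∀ i, sgnEta p q i ^ 2 = 1 := by
    intro i
    unfold sgnEta
    split_ifs <;> norm_num
  simp [this]

theorem choose_re (k : ℕ) :
    (((-1 : ℝ) ^ (k.choose 2) : ℝ) : ℂ) = (((1 - Complex.I) * Complex.I ^ k).re : ℂ) ∧
    (((-1 : ℝ) ^ k * (-1 : ℝ) ^ (k.choose 2) : ℝ) : ℂ)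
      = (((1 - Complex.I) * Complex.I ^ (k + 1)).re : ℂ) := by
  induction k with
  | zero => simp
  | succ k ih =>
    have h1 : (k + 1).choose 2 = k + k.choose 2 := by
      rw [Nat.choose_succ_succ' _ 1]; simp
    have h2 : (1 - Complex.I) * Complex.I ^ (k + 1 + 1) = - ((1 - Complex.I) * Complex.I ^ k) := by
      rw [pow_succ, pow_succ, mul_assoc (Complex.I ^ k), Complex.I_mul_I]; ring
    refine ⟨by rw [h1, pow_add]; exact ih.2, ?_⟩
    rw [h1, h2, Complex.neg_re, Complex.ofReal_neg, ← ih.1, ← Complex.ofReal_neg, pow_add, pow_succ]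
    have : ((-1 : ℝ) ^ k) * (-1 : ℝ) ^ k = 1 := by
      rw [← mul_pow]; norm_num
    congr 1
    linear_combination (-(-1 : ℝ) ^ (k.choose 2)) * this

theorem one_add_I : (1 + Complex.I) = (√2 : ℂ) * Complex.exp ((π / 4 : ℝ) * Complex.I) := by
  rw [Complex.exp_mul_I, ← Complex.ofReal_cos, ← Complex.ofReal_sin, Real.cos_pi_div_four,
    Real.sin_pi_div_four]
  have : (√2 : ℂ) * (√2 : ℂ) = 2 := by
    rw [← Complex.ofReal_mul, Real.mul_self_sqrt (by norm_num)]; simp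
  push_cast
  linear_combination (-(1 + Complex.I) / 2) * this

theorem one_sub_I : (1 - Complex.I) = (√2 : ℂ) * Complex.exp ((-(π / 4) : ℝ) * Complex.I) := by
  rw [Complex.exp_mul_I, ← Complex.ofReal_cos, ← Complex.ofReal_sin, Real.cos_neg, Real.sin_neg,
    Real.cos_pi_div_four, Real.sin_pi_div_four]
  have : (√2 : ℂ) * (√2 : ℂ) = 2 := by
    rw [← Complex.ofReal_mul, Real.mul_self_sqrt (by norm_num)]; simp
  push_cast
  linear_combination (-(1 - Complex.I) / 2) * this

theorem sum_sgn (p q : ℕ) : ∑ A, sgnA p q A =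
    (2 : ℝ) ^ ((((p + q : ℕ) : ℝ) + 1) / 2) * Real.sin (π * ((p : ℝ) - (q : ℝ) + 1) / 4) := by
  have h1 : ∀ A, sgnA p q A = ((1 - Complex.I) * ∏ i ∈ A, (Complex.I * (sgnEta p q i : ℂ))).re := by
    intro A
    rw [Finset.prod_mul_distrib, Finset.prod_const, ← Complex.ofReal_prod, ← mul_assoc,
      Complex.re_mul_ofReal, sgnA]
    congr 1
    exact_mod_cast (choose_re A.card).1
  rw [Finset.sum_congr rfl (fun A _ => h1 A), ← Complex.re_sum, ← Finset.mul_sum,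
    ← Finset.powerset_univ, ← Finset.prod_one_add, Fin.prod_univ_add]
  simp only [sgnEta, Fin.val_castAdd, Fin.is_lt, if_true, Fin.val_natAdd, Finset.prod_const,
    Finset.card_univ, Fintype.card_fin]
  have h2 : ∀ x : ℕ, ¬ (p + x < p) := by intro x; omega
  simp only [h2, if_false, Finset.prod_const, Finset.card_univ, Fintype.card_fin]
  have h3 : (1 - Complex.I) * ((1 + Complex.I * ((1 : ℝ) : ℂ)) ^ p
      * (1 + Complex.I * ((-1 : ℝ) : ℂ)) ^ q)
      = ((√2 ^ (p + q + 1) : ℝ) : ℂ) *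
        Complex.exp ((π * ((p : ℝ) - (q : ℝ) + 1) / 4 - π / 2 : ℝ) * Complex.I) := by
    have e1 : 1 + Complex.I * ((1 : ℝ) : ℂ) = 1 + Complex.I := by simp
    have e2 : 1 + Complex.I * ((-1 : ℝ) : ℂ) = 1 - Complex.I := by simp [sub_eq_add_neg]
    rw [e1, e2, one_add_I, one_sub_I, mul_pow, mul_pow, ← Complex.exp_nat_mul,
      ← Complex.exp_nat_mul]
    have : ((π * ((p : ℝ) - (q : ℝ) + 1) / 4 - π / 2 : ℝ) * Complex.I)
      = (-(π / 4) : ℝ) * Complex.I + (p * ((π / 4 : ℝ) * Complex.I)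
        + q * ((-(π / 4) : ℝ) * Complex.I)) := by
      push_cast; ring
    rw [this, Complex.exp_add, Complex.exp_add]
    push_cast
    ring
  rw [h3, Complex.re_ofReal_mul, Complex.exp_ofReal_mul_I_re, Real.cos_sub_pi_div_two]
  congr 1
  rw [Real.sqrt_eq_rpow, ← Real.rpow_natCast, ← Real.rpow_mul (by norm_num)]
  congr 1
  push_cast
  ring

/-- Each basis element `e_A` squares to `±e`; if `P` (resp. `Q`) is the number of
multi-indices with `(e_A)² = e` (resp. `−e`), then
`P = 2^{(n−1)/2}(2^{(n−1)/2} + sin(π(p−q+1)/4))`,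
`Q = 2^{(n−1)/2}(2^{(n−1)/2} − sin(π(p−q+1)/4))`; equivalently
`P − Q = 2^{(n+1)/2} sin(π(p−q+1)/4)` and `P + Q = 2^n`. -/
theorem exterior_signature_formulas (p q : ℕ) (n : ℕ) (hn : n = p + q) :
    (∀ A : Finset (Fin (p + q)),
        basisEl p q A * basisEl p q A = 1 ∨ basisEl p q A * basisEl p q A = -1) ∧
    (({A : Finset (Fin (p + q)) | basisEl p q A * basisEl p q A = 1}.ncard : ℝ) =
        (2 : ℝ) ^ (((n : ℝ) - 1) / 2) *
          ((2 : ℝ) ^ (((n : ℝ) - 1) / 2) + Real.sin (π * ((p : ℝ) - (q : ℝ) + 1) / 4))) ∧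
    (({A : Finset (Fin (p + q)) | basisEl p q A * basisEl p q A = -1}.ncard : ℝ) =
        (2 : ℝ) ^ (((n : ℝ) - 1) / 2) *
          ((2 : ℝ) ^ (((n : ℝ) - 1) / 2) - Real.sin (π * ((p : ℝ) - (q : ℝ) + 1) / 4))) ∧
    (({A : Finset (Fin (p + q)) | basisEl p q A * basisEl p q A = 1}.ncard : ℝ) -
        ({A : Finset (Fin (p + q)) | basisEl p q A * basisEl p q A = -1}.ncard : ℝ) =
        (2 : ℝ) ^ (((n : ℝ) + 1) / 2) * Real.sin (π * ((p : ℝ) - (q : ℝ) + 1) / 4)) ∧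
    ({A : Finset (Fin (p + q)) | basisEl p q A * basisEl p q A = 1}.ncard +
        {A : Finset (Fin (p + q)) | basisEl p q A * basisEl p q A = -1}.ncard = 2 ^ n) := by
  subst hn
  have hinj : Function.Injective (algebraMap ℝ (Cl p q)) := FaithfulSMul.algebraMap_injective _ _
  have i1 : ∀ A, basisEl p q A * basisEl p q A = 1 ↔ sgnA p q A = 1 := by
    intro A
    rw [basisEl_sq, ← map_one (algebraMap ℝ (Cl p q)), hinj.eq_iff]
  have i2 : ∀ A, basisEl p q A * basisEl p q A = -1 ↔ sgnA p q A = -1 := by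
    intro A
    rw [basisEl_sq, ← map_one (algebraMap ℝ (Cl p q)), ← map_neg, hinj.eq_iff]
  simp only [i1, i2]
  set P := {A : Finset (Fin (p + q)) | sgnA p q A = 1}.ncard with hP
  set N := {A : Finset (Fin (p + q)) | sgnA p q A = -1}.ncard with hN
  classical
  have cP : P = (Finset.univ.filter fun A => sgnA p q A = 1).card := by
    rw [hP, ← Set.ncard_coe_finset]; simp
  have cN : N = (Finset.univ.filter fun A => sgnA p q A = -1).card := by
    rw [hN, ← Set.ncard_coe_finset]; simp
  have hneg : ∀ A, (¬ sgnA p q A = 1) ↔ sgnA p q A = -1 := by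
    intro A
    rcases sgnA_or p q A with h | h <;> rw [h] <;> norm_num
  have hadd : P + N = 2 ^ (p + q) := by
    rw [cP, cN]
    have := Finset.card_filter_add_card_filter_not (s := Finset.univ) (fun A => sgnA p q A = 1)
    simp only [hneg] at this
    rw [this]
    simp
  have hsub : (P : ℝ) - N = ∑ A, sgnA p q A := by
    rw [← Finset.sum_filter_add_sum_filter_not Finset.univ (fun A => sgnA p q A = 1)]
    simp only [hneg]
    rw [Finset.sum_congr rfl (g := fun _ => (1 : ℝ)) (fun A hA => (Finset.mem_filter.1 hA).2),
      Finset.sum_congr (s₁ := Finset.univ.filter fun A => sgnA p q A = -1) rfl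
        (g := fun _ => (-1 : ℝ)) (fun A hA => (Finset.mem_filter.1 hA).2), cP, cN]
    simp [sub_eq_add_neg]
  rw [sum_sgn] at hsub
  have hadd' : (P : ℝ) + N = 2 ^ (p + q) := by exact_mod_cast hadd
  have r1 : (2 : ℝ) ^ ((((p + q : ℕ) : ℝ) + 1) / 2)
      = 2 * (2 : ℝ) ^ ((((p + q : ℕ) : ℝ) - 1) / 2) := by
    rw [show (((p + q : ℕ) : ℝ) + 1) / 2 = 1 + (((p + q : ℕ) : ℝ) - 1) / 2 by ring,
      Real.rpow_add (by norm_num), Real.rpow_one]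
  have r2 : (2 : ℝ) ^ (p + q) = 2 * ((2 : ℝ) ^ ((((p + q : ℕ) : ℝ) - 1) / 2)
      * (2 : ℝ) ^ ((((p + q : ℕ) : ℝ) - 1) / 2)) := by
    have h2 : (0 : ℝ) < 2 := by norm_num
    rw [← Real.rpow_natCast, ← Real.rpow_add h2]
    nth_rewrite 2 [← Real.rpow_one (2 : ℝ)]
    rw [← Real.rpow_add h2]
    congr 1
    ring
  refine ⟨sgnA_or p q, ?_, ?_, hsub, hadd⟩
  · rw [r1] at hsub
    linarith
  · rw [r1] at hsub
    linarith
end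

section
/- For i = 1, 2 let (P_i, Q_i) be the exterior signature of the real Clifford algebra Cl_{p_i,q_i}. Then Cl_{p₁,q₁} and Cl_{p₂,q₂} are isomorphic as real associative unital algebras if and only if (P₁, Q₁) = (P₂, Q₂). -/
open CliffordAlgebra

/-- The exterior signature `(P, Q)` of `Cl_{p,q}`: `P` is the number of ordered
multi-indices `A` with `(e_A)² = e` and `Q` the number with `(e_A)² = −e`. -/
noncomputable def extSig (p q : ℕ) : ℕ × ℕ :=
  ({A : Finset (Fin (p + q)) | basisEl p q A * basisEl p q A = 1}.ncard,
   {A : Finset (Fin (p + q)) | basisEl p q A * basisEl p q A = -1}.ncard)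


namespace CS

set_option linter.unusedSectionVars false

section general
variable {ι : Type} [Fintype ι] [DecidableEq ι]

noncomputable abbrev C (w : ι → ℝ) : Type :=
  CliffordAlgebra (QuadraticMap.weightedSumSquares ℝ w)

noncomputable def g (w : ι → ℝ) (i : ι) : C w :=
  CliffordAlgebra.ι (QuadraticMap.weightedSumSquares ℝ w) (Pi.single i 1)

lemma g_sq (w : ι → ℝ) (i : ι) : g w i * g w i = algebraMap ℝ _ (w i) := by
  rw [g, CliffordAlgebra.ι_sq_scalar]
  congr 1
  simp [Pi.single_apply]

lemma g_anti (w : ι → ℝ) {i j : ι} (h : i ≠ j) : g w i * g w j = -(g w j * g w i) := by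
  apply CliffordAlgebra.ι_mul_ι_comm_of_isOrtho
  rw [QuadraticMap.isOrtho_def]
  simp only [QuadraticMap.weightedSumSquares_apply, ← Finset.sum_add_distrib]
  apply Finset.sum_congr rfl
  intro k _
  by_cases h1 : k = i
  · subst h1
    simp [h]
  · simp [Pi.single_apply, h1]

lemma lift_cond {A : Type*} [Ring A] [Algebra ℝ A] (w : ι → ℝ) (f : ι → A)
    (h1 : ∀ i, f i * f i = algebraMap ℝ A (w i))
    (h2 : ∀ i j, i ≠ j → f i * f j = -(f j * f i)) (m : ι → ℝ) :
    Fintype.linearCombination ℝ f m * Fintype.linearCombination ℝ f m =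
      algebraMap ℝ A (QuadraticMap.weightedSumSquares ℝ w m) := by
  have e1 : Fintype.linearCombination ℝ f m * Fintype.linearCombination ℝ f m
      = ∑ i, ∑ j, (m i * m j) • (f i * f j) := by
    simp [Fintype.linearCombination_apply, Finset.sum_mul_sum, smul_smul, mul_comm]
  have e2 : Fintype.linearCombination ℝ f m * Fintype.linearCombination ℝ f m
      = ∑ i, ∑ j, (m i * m j) • (f j * f i) := by
    rw [e1, Finset.sum_comm]
    simp [mul_comm]
  have e3 : (2 : ℝ) • (Fintype.linearCombination ℝ f m * Fintype.linearCombination ℝ f m)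
      = (2 : ℝ) • algebraMap ℝ A (QuadraticMap.weightedSumSquares ℝ w m) := by
    rw [two_smul]
    nth_rewrite 1 [e1]
    rw [e2, ← Finset.sum_add_distrib]
    simp only [← Finset.sum_add_distrib, ← smul_add]
    have : ∀ i, ∑ j, (m i * m j) • (f i * f j + f j * f i)
        = (2 : ℝ) • algebraMap ℝ A (w i * (m i * m i)) := by
      intro i
      rw [Finset.sum_eq_single i]
      · rw [h1, ← two_smul ℝ, Algebra.algebraMap_eq_smul_one,
          Algebra.algebraMap_eq_smul_one]
        module
      · intro j _ hj
        rw [h2 j i hj]; simp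
      · simp
    rw [Finset.sum_congr rfl (fun i _ => this i), ← Finset.smul_sum, ← map_sum]
    simp
  exact (smul_right_injective A (two_ne_zero (α := ℝ))) e3

noncomputable def liftC {A : Type*} [Ring A] [Algebra ℝ A] (w : ι → ℝ) (f : ι → A)
    (h1 : ∀ i, f i * f i = algebraMap ℝ A (w i))
    (h2 : ∀ i j, i ≠ j → f i * f j = -(f j * f i)) : C w →ₐ[ℝ] A :=
  CliffordAlgebra.lift _ ⟨Fintype.linearCombination ℝ f, lift_cond w f h1 h2⟩

@[simp] lemma liftC_g {A : Type*} [Ring A] [Algebra ℝ A] (w : ι → ℝ) (f : ι → A)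
    (h1 : ∀ i, f i * f i = algebraMap ℝ A (w i))
    (h2 : ∀ i j, i ≠ j → f i * f j = -(f j * f i)) (i : ι) :
    liftC w f h1 h2 (g w i) = f i := by
  rw [liftC, g, CliffordAlgebra.lift_ι_apply]
  simp

lemma hom_ext_g {A : Type*} [Ring A] [Algebra ℝ A] (w : ι → ℝ) {φ ψ : C w →ₐ[ℝ] A}
    (h : ∀ i, φ (g w i) = ψ (g w i)) : φ = ψ := by
  apply CliffordAlgebra.hom_ext
  apply LinearMap.pi_ext'
  intro i
  ext
  exact h i

/-- build an equivalence from inverse assignments on generators -/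
noncomputable def equivC {κ : Type} [Fintype κ] [DecidableEq κ] (w : ι → ℝ) (v : κ → ℝ)
    (φ : C w →ₐ[ℝ] C v) (ψ : C v →ₐ[ℝ] C w) (h1 : ∀ i, ψ (φ (g w i)) = g w i)
    (h2 : ∀ i, φ (ψ (g v i)) = g v i) : C w ≃ₐ[ℝ] C v :=
  AlgEquiv.ofAlgHom φ ψ (hom_ext_g _ h2) (hom_ext_g _ h1)

/-- reindexing -/
lemma iso_reindex {κ : Type} [Fintype κ] [DecidableEq κ] (w : ι → ℝ) (v : κ → ℝ) (e : ι ≃ κ)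
    (h : ∀ i, v (e i) = w i) : Nonempty (C w ≃ₐ[ℝ] C v) := by
  refine ⟨equivC w v (liftC w (fun i => g v (e i)) ?_ ?_) (liftC v (fun i => g w (e.symm i)) ?_ ?_)
    ?_ ?_⟩
  · intro i; rw [g_sq, h]
  · intro i j hij; exact g_anti _ (fun h => hij (e.injective h))
  · intro i; rw [g_sq, ← h]; simp
  · intro i j hij; exact g_anti _ (fun h => hij (e.symm.injective h))
  · simp
  · simp

/-- `Cl_{p+1,q} → Cl_{q+1,p}` -/
lemma step1_rel {A : Type*} [Ring A] [Algebra ℝ A] (e : A) (f : ι → A) (w : ι → ℝ) (he : e * e = 1)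
    (hef : ∀ i, f i * e = - (e * f i))
    (h1 : ∀ i, f i * f i = algebraMap ℝ A (w i))
    (h2 : ∀ i j, i ≠ j → f i * f j = -(f j * f i)) :
    (∀ i, (e * f i) * (e * f i) = algebraMap ℝ A (- w i)) ∧
    (∀ i, (e * f i) * e = - (e * (e * f i))) ∧
    (∀ i j, i ≠ j → (e * f i) * (e * f j) = -((e * f j) * (e * f i))) := by
  have key : ∀ i j, (e * f i) * (e * f j) = - (f i * f j) := by
    intro i j
    rw [mul_assoc, ← mul_assoc (f i), hef, neg_mul, mul_neg, mul_assoc, ← mul_assoc e e, he,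
      one_mul]
  refine ⟨fun i => ?_, fun i => ?_, fun i j hij => ?_⟩
  · rw [key, h1, map_neg]
  · rw [mul_assoc, hef, mul_neg]
  · rw [key, key, h2 i j hij]

noncomputable def step1_hom (w v : ι → ℝ) (h : ∀ i, v i = - w i) :
    C (fun o : Option ι => o.elim 1 w) →ₐ[ℝ] C (fun o : Option ι => o.elim 1 v) :=
  liftC _ (fun o => o.elim (g (fun o : Option ι => o.elim 1 v) none)
      (fun i => g (fun o : Option ι => o.elim 1 v) none * g (fun o : Option ι => o.elim 1 v) (some i)))
    (by
      have := (step1_rel (g (fun o : Option ι => o.elim 1 v) none)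
        (fun i => g (fun o : Option ι => o.elim 1 v) (some i)) v
        (by simp [g_sq]) (fun i => g_anti _ (by simp)) (fun i => by simp [g_sq])
        (fun i j hij => g_anti _ (by simpa using hij))).1
      rintro (_ | i)
      · simp [g_sq]
      · simp only [Option.elim_some]
        rw [this, h, neg_neg])
    (by
      obtain ⟨-, h2, h3⟩ := (step1_rel (g (fun o : Option ι => o.elim 1 v) none)
        (fun i => g (fun o : Option ι => o.elim 1 v) (some i)) v
        (by simp [g_sq]) (fun i => g_anti _ (by simp)) (fun i => by simp [g_sq])
        (fun i j hij => g_anti _ (by simpa using hij)))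
      rintro (_ | i) (_ | j) hij
      · simp at hij
      · simp only [Option.elim_some, Option.elim_none]
        rw [h2, neg_neg]
      · simp only [Option.elim_some, Option.elim_none]
        rw [h2]
      · exact h3 i j (by simpa using hij))

lemma iso_step1 (w v : ι → ℝ) (h : ∀ i, v i = - w i) :
    Nonempty (C (fun o : Option ι => o.elim 1 w) ≃ₐ[ℝ] C (fun o : Option ι => o.elim 1 v)) := by
  refine ⟨equivC _ _ (step1_hom w v h) (step1_hom v w (fun i => by simp [h])) ?_ ?_⟩
  all_goals
    rintro (_ | i)
    · simp [step1_hom]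
    · simp only [step1_hom, liftC_g, map_mul, Option.elim_some, Option.elim_none]
      rw [← mul_assoc, g_sq]
      simp


section four
variable {A : Type*} [Ring A] [Algebra ℝ A]

def om (a : Fin 4 → A) : A := a 0 * a 1 * (a 2 * a 3)

lemma om_comm (a : Fin 4 → A) (b : A) (h : ∀ i, b * a i = - (a i * b)) :
    b * om a = om a * b := by
  have h' : ∀ i, SemiconjBy b (a i) (- a i) := fun i => by
    rw [SemiconjBy, h, neg_mul]
  have := ((h' 0).mul_right (h' 1)).mul_right ((h' 2).mul_right (h' 3))
  simpa [SemiconjBy, om] using this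

lemma om_anti (a : Fin 4 → A) (h : ∀ i j, i ≠ j → a i * a j = - (a j * a i)) (i : Fin 4) :
    a i * om a = - (om a * a i) := by
  have h' : ∀ i j, i ≠ j → SemiconjBy (a i) (a j) (- a j) := fun i j hij => by
    rw [SemiconjBy, h i j hij, neg_mul]
  have h0 : ∀ i, SemiconjBy (a i) (a i) (a i) := fun i => rfl
  fin_cases i
  · simpa [SemiconjBy, om] using
      ((h0 0).mul_right (h' 0 1 (by decide))).mul_right ((h' 0 2 (by decide)).mul_right (h' 0 3 (by decide)))
  · simpa [SemiconjBy, om] using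
      ((h' 1 0 (by decide)).mul_right (h0 1)).mul_right ((h' 1 2 (by decide)).mul_right (h' 1 3 (by decide)))
  · simpa [SemiconjBy, om] using
      ((h' 2 0 (by decide)).mul_right (h' 2 1 (by decide))).mul_right ((h0 2).mul_right (h' 2 3 (by decide)))
  · simpa [SemiconjBy, om] using
      ((h' 3 0 (by decide)).mul_right (h' 3 1 (by decide))).mul_right ((h' 3 2 (by decide)).mul_right (h0 3))

lemma om_sq (a : Fin 4 → A) (s : ℝ) (hs : s * s = 1)
    (h1 : ∀ i, a i * a i = algebraMap ℝ A s)
    (h : ∀ i j, i ≠ j → a i * a j = - (a j * a i)) : om a * om a = 1 := by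
  have hsq : ∀ i j, i ≠ j → (a i * a j) * (a i * a j) = -1 := by
    intro i j hij
    have : (a i * a j) * (a i * a j) = a i * (a j * a i) * a j := by noncomm_ring
    rw [this, h j i hij.symm]
    have : a i * -(a i * a j) * a j = - ((a i * a i) * (a j * a j)) := by noncomm_ring
    rw [this, h1, h1, ← map_mul, hs, map_one]
  have hc : (a 2 * a 3) * (a 0 * a 1) = (a 0 * a 1) * (a 2 * a 3) := by
    have h' : ∀ i j, i ≠ j → SemiconjBy (a i) (a j) (- a j) := fun i j hij => by
      rw [SemiconjBy, h i j hij, neg_mul]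
    have hk : ∀ k : Fin 4, k ≠ 0 → k ≠ 1 → SemiconjBy (a k) (a 0 * a 1) (a 0 * a 1) := by
      intro k h0 h1
      simpa using (h' k 0 h0).mul_right (h' k 1 h1)
    exact (hk 2 (by decide) (by decide)).mul_left (hk 3 (by decide) (by decide))
  have : om a * om a = (a 0 * a 1) * ((a 2 * a 3) * (a 0 * a 1)) * (a 2 * a 3) := by
    rw [om]; noncomm_ring
  rw [this, hc]
  have : a 0 * a 1 * (a 0 * a 1 * (a 2 * a 3)) * (a 2 * a 3)
    = ((a 0 * a 1) * (a 0 * a 1)) * ((a 2 * a 3) * (a 2 * a 3)) := by noncomm_ring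
  rw [this, hsq _ _ (by decide), hsq _ _ (by decide)]; simp

lemma om_mul (a : Fin 4 → A) (s : ℝ) (hs : s * s = 1)
    (h1 : ∀ i, a i * a i = algebraMap ℝ A s)
    (h : ∀ i j, i ≠ j → a i * a j = - (a j * a i)) (i j : Fin 4) :
    (om a * a i) * (om a * a j) = - (a i * a j) := by
  rw [mul_assoc, ← mul_assoc (a i), om_anti a h, neg_mul, mul_neg, mul_assoc, ← mul_assoc,
    om_sq a s hs h1 h, one_mul]

lemma om_om (a : Fin 4 → A) (s : ℝ) (hs : s * s = 1)
    (h1 : ∀ i, a i * a i = algebraMap ℝ A s)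
    (h : ∀ i j, i ≠ j → a i * a j = - (a j * a i)) : om (fun i => om a * a i) = om a := by
  have := om_mul a s hs h1 h
  conv_lhs => rw [om]
  simp only [this]
  rw [om]; simp

lemma map_om {B : Type*} [Ring B] [Algebra ℝ B] (φ : A →ₐ[ℝ] B) (a : Fin 4 → A) :
    φ (om a) = om (fun i => φ (a i)) := by simp [om]

end four

noncomputable abbrev W4 (s : ℝ) (w : ι → ℝ) : Fin 4 ⊕ ι → ℝ := Sum.elim (fun _ => s) w

noncomputable abbrev ga (s : ℝ) (w : ι → ℝ) (i : Fin 4) : C (W4 s w) := g (W4 s w) (Sum.inl i)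

lemma ga_sq (s : ℝ) (w : ι → ℝ) (i : Fin 4) :
    ga s w i * ga s w i = algebraMap ℝ _ s := by simp [g_sq]

lemma ga_anti (s : ℝ) (w : ι → ℝ) (i j : Fin 4) (h : i ≠ j) :
    ga s w i * ga s w j = - (ga s w j * ga s w i) := g_anti _ (by simpa using h)

noncomputable def step2_hom (s t : ℝ) (hs : s * s = 1) (ht : t = - s) (w : ι → ℝ) :
    C (W4 s w) →ₐ[ℝ] C (W4 t w) :=
  liftC _ (Sum.elim (fun i => om (ga t w) * ga t w i) (fun j => g (W4 t w) (Sum.inr j)))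
    (by
      have ht' : t * t = 1 := by rw [ht]; simpa using hs
      rintro (i | j)
      · simp only [Sum.elim_inl]
        rw [om_mul _ t ht' (ga_sq t w) (ga_anti t w), ga_sq, ht]; simp
      · simp [g_sq])
    (by
      have ht' : t * t = 1 := by rw [ht]; simpa using hs
      have hc : ∀ j, g (W4 t w) (Sum.inr j) * om (ga t w) = om (ga t w) * g (W4 t w) (Sum.inr j) :=
        fun j => om_comm _ _ (fun i => g_anti _ (by simp))
      have ha : ∀ i j, ga t w i * g (W4 t w) (Sum.inr j) = -(g (W4 t w) (Sum.inr j) * ga t w i) :=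
        fun i j => g_anti _ (by simp)
      rintro (i | i) (j | j) hij
      · simp only [Sum.elim_inl]
        rw [om_mul _ t ht' (ga_sq t w) (ga_anti t w), om_mul _ t ht' (ga_sq t w) (ga_anti t w),
          ga_anti t w i j (by simpa using hij)]
      · simp only [Sum.elim_inl, Sum.elim_inr]
        rw [mul_assoc, ha, ← mul_assoc (g _ _), hc, mul_neg, mul_assoc]
      · simp only [Sum.elim_inl, Sum.elim_inr]
        rw [mul_assoc, ha, ← mul_assoc (g _ _), hc, mul_neg, mul_assoc, neg_neg]
      · exact g_anti _ hij)

lemma iso_step2 (s t : ℝ) (hs : s * s = 1) (ht : t = - s) (w : ι → ℝ) :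
    Nonempty (C (W4 s w) ≃ₐ[ℝ] C (W4 t w)) := by
  have ht' : t * t = 1 := by rw [ht]; simpa using hs
  refine ⟨equivC _ _ (step2_hom s t hs ht w) (step2_hom t s ht' (by simp [ht]) w) ?_ ?_⟩
  · rintro (i | j)
    · simp only [step2_hom, liftC_g, map_mul, Sum.elim_inl, map_om]
      rw [om_om _ s hs (ga_sq s w) (ga_anti s w), ← mul_assoc,
        om_sq _ s hs (ga_sq s w) (ga_anti s w), one_mul]
    · simp [step2_hom]
  · rintro (i | j)
    · simp only [step2_hom, liftC_g, map_mul, Sum.elim_inl, map_om]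
      rw [om_om _ t ht' (ga_sq t w) (ga_anti t w), ← mul_assoc,
        om_sq _ t ht' (ga_sq t w) (ga_anti t w), one_mul]
    · simp [step2_hom]

end general

/-- standard weights -/
noncomputable abbrev W (p q : ℕ) : Fin p ⊕ Fin q → ℝ := Sum.elim (fun _ => 1) (fun _ => -1)

lemma iso_std (p q : ℕ) : Nonempty (C (W p q) ≃ₐ[ℝ] Cl p q) := by
  refine iso_reindex (W p q) (fun i : Fin (p + q) => if (i : ℕ) < p then (1 : ℝ) else -1)
    finSumFinEquiv ?_
  rintro (i | i) <;> simp

def Iso (p q p' q' : ℕ) : Prop := Nonempty (Cl p q ≃ₐ[ℝ] Cl p' q')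

lemma Iso.symm {p q p' q' : ℕ} (h : Iso p q p' q') : Iso p' q' p q := h.map AlgEquiv.symm
lemma Iso.trans {p q p' q' p'' q'' : ℕ} (h : Iso p q p' q') (h' : Iso p' q' p'' q'') :
    Iso p q p'' q'' := by
  obtain ⟨e⟩ := h
  obtain ⟨e'⟩ := h'
  exact ⟨e.trans e'⟩

lemma iso_refl' {p q p' q' : ℕ} (h1 : p = p') (h2 : q = q') : Iso p q p' q' := by
  subst h1 h2; exact ⟨AlgEquiv.refl⟩

lemma Iso.of {p q p' q' : ℕ} (h : Nonempty (C (W p q) ≃ₐ[ℝ] C (W p' q'))) : Iso p q p' q' := by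
  obtain ⟨e⟩ := iso_std p q
  obtain ⟨e'⟩ := iso_std p' q'
  obtain ⟨f⟩ := h
  exact ⟨(e.symm.trans f).trans e'⟩

lemma iso1 (p q : ℕ) : Iso (p + 1) q (q + 1) p := by
  apply Iso.of
  have aux : ∀ p q : ℕ, Nonempty (C (W (p+1) q) ≃ₐ[ℝ] C (fun o : Option (Fin p ⊕ Fin q) => o.elim 1 (W p q))) := by
    intro p q
    let e : Fin (p+1) ⊕ Fin q ≃ Option (Fin p ⊕ Fin q) :=
      ((finSuccEquiv p).sumCongr (Equiv.refl _)).trans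
        (((Equiv.optionEquivSumPUnit.{0} (Fin p)).sumCongr (Equiv.refl _)).trans
          (((Equiv.sumComm _ _).sumCongr (Equiv.refl _)).trans
            ((Equiv.sumAssoc _ _ _).trans ((Equiv.sumComm _ _).trans
              (Equiv.optionEquivSumPUnit.{0} _).symm))))
    refine iso_reindex _ _ e ?_
    rintro (i | i)
    · refine Fin.cases ?_ (fun i => ?_) i <;> simp [e]
    · simp [e]
  obtain ⟨a⟩ := aux p q
  obtain ⟨b⟩ := aux q p
  obtain ⟨c⟩ := iso_step1 (W p q) (fun i => W q p i.swap) (by rintro (i | i) <;> simp)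
  obtain ⟨d⟩ := iso_reindex (fun o : Option (Fin p ⊕ Fin q) => o.elim 1 (fun i => W q p i.swap))
    (fun o : Option (Fin q ⊕ Fin p) => o.elim 1 (W q p)) (Equiv.sumComm _ _).optionCongr
    (by rintro (_ | i) <;> simp)
  exact ⟨((a.trans c).trans d).trans b.symm⟩

lemma iso2 (p q : ℕ) : Iso (p + 4) q p (q + 4) := by
  apply Iso.of
  obtain ⟨a⟩ := iso_reindex (W (p+4) q) (W4 1 (W p q))
    (((finSumFinEquiv.symm.trans (Equiv.sumComm _ _)).sumCongr (Equiv.refl _)).trans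
      (Equiv.sumAssoc _ _ _)) (by
        rintro (i | i)
        · refine Fin.addCases (fun i => ?_) (fun i => ?_) i <;> simp
        · simp)
  obtain ⟨b⟩ := iso_step2 1 (-1) (by simp) (by simp) (W p q)
  obtain ⟨c⟩ := iso_reindex (W4 (-1) (W p q)) (W p (q + 4))
    ((Equiv.sumComm _ _).trans ((Equiv.sumAssoc _ _ _).trans
      ((Equiv.refl _).sumCongr finSumFinEquiv))) (by rintro (i | i | i) <;> simp)
  exact ⟨(a.trans b).trans c⟩

lemma iso2_mul (p q k : ℕ) : Iso (p + 4 * k) q p (q + 4 * k) := by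
  induction k generalizing q with
  | zero => exact iso_refl' rfl rfl
  | succ k ih =>
    exact (iso2 (p + 4 * k) q).trans ((ih (q + 4)).trans (iso_refl' rfl (by ring)))

lemma iso_mod4 {p q p' q' : ℕ} (hn : p + q = p' + q') (h : p % 4 = p' % 4) : Iso p q p' q' := by
  rcases le_total p p' with hl | hl
  · obtain ⟨k, hk⟩ : ∃ k, p' = p + 4 * k := ⟨(p' - p) / 4, by omega⟩
    exact ((iso_refl' hk rfl).trans ((iso2_mul p q' k).trans (iso_refl' rfl (by omega)))).symm
  · obtain ⟨k, hk⟩ : ∃ k, p = p' + 4 * k := ⟨(p - p') / 4, by omega⟩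
    exact ((iso_refl' hk rfl).trans ((iso2_mul p' q k).trans (iso_refl' rfl (by omega))))

lemma iso_mod4' {p q p' q' : ℕ} (hn : p + q = p' + q') (h : (p + p') % 4 = (p + q + 1) % 4) :
    Iso p q p' q' := by
  rcases p with _ | p
  · rcases p' with _ | p'
    · exact iso_refl' rfl (by omega)
    · exact ((iso1 p' q').trans (iso_mod4 (by omega) (by omega))).symm
  · exact (iso1 p q).trans (iso_mod4 (by omega) (by omega))

section sign
variable (p q : ℕ)

def eta (i : Fin (p + q)) : ℤ := if (i : ℕ) < p then 1 else -1

def sg (A : Finset (Fin (p + q))) : ℤ := (-1) ^ (A.card.choose 2) * ∏ i ∈ A, eta p q i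

lemma gen_sq (i : Fin (p + q)) : gen p q i * gen p q i = algebraMap ℝ _ ((eta p q i : ℤ) : ℝ) := by
  have := g_sq (fun i : Fin (p + q) => if (i : ℕ) < p then (1 : ℝ) else -1) i
  refine Eq.trans this ?_
  congr 1
  simp only [eta]
  split_ifs <;> simp

lemma gen_anti {i j : Fin (p + q)} (h : i ≠ j) :
    gen p q i * gen p q j = -(gen p q j * gen p q i) :=
  g_anti (fun i : Fin (p + q) => if (i : ℕ) < p then (1 : ℝ) else -1) h

lemma gen_list (a : Fin (p + q)) (l : List (Fin (p + q))) (h : a ∉ l) :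
    (l.map (gen p q)).prod * gen p q a = (-1 : ℝ) ^ l.length • (gen p q a * (l.map (gen p q)).prod) := by
  induction l with
  | nil => simp
  | cons b l ih =>
    simp only [List.mem_cons, not_or] at h
    simp only [List.map_cons, List.prod_cons, List.length_cons]
    rw [mul_assoc, ih h.2, mul_smul_comm, ← mul_assoc, gen_anti p q (Ne.symm h.1), pow_succ]
    simp [mul_assoc]

lemma list_sq (l : List (Fin (p + q))) (h : l.Nodup) :
    (l.map (gen p q)).prod * (l.map (gen p q)).prod =
      algebraMap ℝ _ ((((-1) ^ (l.length.choose 2) * (l.map (eta p q)).prod : ℤ)) : ℝ) := by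
  induction l with
  | nil => simp
  | cons b l ih =>
    simp only [List.nodup_cons] at h
    simp only [List.map_cons, List.prod_cons, List.length_cons]
    have : gen p q b * (l.map (gen p q)).prod * (gen p q b * (l.map (gen p q)).prod)
      = gen p q b * ((l.map (gen p q)).prod * gen p q b) * (l.map (gen p q)).prod := by
      simp only [mul_assoc]
    rw [this, gen_list p q b l h.1, mul_smul_comm, ← mul_assoc, gen_sq, smul_mul_assoc, mul_assoc,
      ih h.2, ← map_mul, Algebra.smul_def, ← map_mul]
    congr 1
    rw [Nat.choose_succ_succ' l.length 1]
    push_cast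
    simp only [Nat.choose_one_right]
    ring

lemma basisEl_sq (A : Finset (Fin (p + q))) :
    basisEl p q A * basisEl p q A = algebraMap ℝ _ ((sg p q A : ℤ) : ℝ) := by
  rw [basisEl, list_sq p q _ (Finset.sort_nodup _ _), sg]
  congr 3
  · simp
  · rw [← List.prod_toFinset _ (Finset.sort_nodup _ _)]
    simp

lemma sg_or (A : Finset (Fin (p + q))) : sg p q A = 1 ∨ sg p q A = -1 := by
  rw [← Int.isUnit_iff, sg]
  apply IsUnit.mul
  · exact (isUnit_one.neg).pow _
  · rw [IsUnit.prod_iff]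
    intro i _
    rw [eta]; split_ifs <;> simp

lemma sq_one_iff (A : Finset (Fin (p + q))) :
    basisEl p q A * basisEl p q A = 1 ↔ sg p q A = 1 := by
  rw [basisEl_sq, ← map_one (algebraMap ℝ (Cl p q)), (algebraMap ℝ (Cl p q)).injective.eq_iff]
  norm_cast

lemma sq_neg_one_iff (A : Finset (Fin (p + q))) :
    basisEl p q A * basisEl p q A = -1 ↔ sg p q A = -1 := by
  rw [basisEl_sq, ← map_one (algebraMap ℝ (Cl p q)), ← map_neg,
    (algebraMap ℝ (Cl p q)).injective.eq_iff]
  norm_cast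

lemma extSig_eq : extSig p q = ({A | sg p q A = 1}.ncard, {A | sg p q A = -1}.ncard) := by
  simp only [extSig, sq_one_iff, sq_neg_one_iff]

end sign

section refl
variable (p q : ℕ)

noncomputable def rhom (i : Fin (p + q)) : Cl p q →ₐ[ℝ] Cl p q :=
  liftC (fun i : Fin (p + q) => if (i : ℕ) < p then (1 : ℝ) else -1)
    (fun j => (if j = i then (-1 : ℝ) else 1) • gen p q j)
    (by
      intro j
      have := g_sq (fun i : Fin (p + q) => if (i : ℕ) < p then (1 : ℝ) else -1) j
      refine Eq.trans ?_ this
      rw [smul_mul_smul_comm]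
      have : (if j = i then (-1 : ℝ) else 1) * (if j = i then (-1 : ℝ) else 1) = 1 := by
        split_ifs <;> simp
      rw [this, one_smul]; rfl)
    (by
      intro j k hjk
      rw [smul_mul_smul_comm, gen_anti p q hjk, smul_mul_smul_comm, mul_comm, smul_neg])

lemma rhom_gen (i j : Fin (p + q)) :
    rhom p q i (gen p q j) = (if j = i then (-1 : ℝ) else 1) • gen p q j :=
  liftC_g (fun i : Fin (p + q) => if (i : ℕ) < p then (1 : ℝ) else -1) _ _ _ j

lemma rhom_rhom (i j : Fin (p + q)) : rhom p q i (rhom p q i (gen p q j)) = gen p q j := by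
  rw [rhom_gen, map_smul, rhom_gen, smul_smul]
  split_ifs <;> simp

noncomputable def requiv (i : Fin (p + q)) : Cl p q ≃ₐ[ℝ] Cl p q :=
  equivC (fun i : Fin (p + q) => if (i : ℕ) < p then (1 : ℝ) else -1)
    (fun i : Fin (p + q) => if (i : ℕ) < p then (1 : ℝ) else -1)
    (rhom p q i) (rhom p q i) (rhom_rhom p q i) (rhom_rhom p q i)

lemma requiv_gen (i j : Fin (p + q)) :
    requiv p q i (gen p q j) = (if j = i then (-1 : ℝ) else 1) • gen p q j := rhom_gen p q i j

lemma requiv_list (i : Fin (p + q)) (l : List (Fin (p + q))) (h : l.Nodup) :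
    requiv p q i (l.map (gen p q)).prod = (if i ∈ l then (-1 : ℝ) else 1) • (l.map (gen p q)).prod := by
  induction l with
  | nil => simp
  | cons b l ih =>
    simp only [List.nodup_cons] at h
    simp only [List.map_cons, List.prod_cons, map_mul, requiv_gen, ih h.2, smul_mul_smul_comm]
    congr 1
    by_cases hb : b = i
    · subst hb; simp [h.1]
    · simp [hb, Ne.symm hb]

lemma requiv_basisEl (i : Fin (p + q)) (A : Finset (Fin (p + q))) :
    requiv p q i (basisEl p q A) = (if i ∈ A then (-1 : ℝ) else 1) • basisEl p q A := by
  rw [basisEl, requiv_list _ _ _ _ (Finset.sort_nodup _ _)]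
  simp

/-- the trace of left multiplication -/
noncomputable def tr (A : Type) [Ring A] [Algebra ℝ A] : A →ₗ[ℝ] ℝ :=
  LinearMap.trace ℝ A ∘ₗ (Algebra.lmul ℝ A).toLinearMap

lemma tr_equiv {A B : Type} [Ring A] [Algebra ℝ A] [Ring B] [Algebra ℝ B] (e : A ≃ₐ[ℝ] B) (x : A) :
    tr B (e x) = tr A x := by
  simp only [tr, LinearMap.comp_apply]
  rw [← LinearMap.trace_conj' _ e.toLinearEquiv]
  congr 1
  ext y
  simp [LinearEquiv.conj_apply]

noncomputable def tf (A : Type) [Ring A] [Algebra ℝ A] : LinearMap.BilinForm ℝ A :=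
  (LinearMap.mul ℝ A).compr₂ (tr A)

lemma tf_apply (A : Type) [Ring A] [Algebra ℝ A] (x y : A) : tf A x y = tr A (x * y) := rfl

lemma ortho {A B : Finset (Fin (p + q))} (h : A ≠ B) :
    tf (Cl p q) (basisEl p q A) (basisEl p q B) = 0 := by
  obtain ⟨i, hi⟩ : ∃ i, ¬ (i ∈ A ↔ i ∈ B) := by
    by_contra hc
    push Not at hc
    exact h (Finset.ext hc)
  rw [tf_apply]
  have h1 := tr_equiv (requiv p q i) (basisEl p q A * basisEl p q B)
  rw [map_mul, requiv_basisEl, requiv_basisEl, smul_mul_smul_comm] at h1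
  have h2 : (if i ∈ A then (-1 : ℝ) else 1) * (if i ∈ B then (-1 : ℝ) else 1) = -1 := by
    by_cases hA : i ∈ A <;> by_cases hB : i ∈ B <;> simp_all
  rw [h2, map_smul, smul_eq_mul] at h1
  linarith

noncomputable def extBasis : Module.Basis (Finset (Fin (p + q))) ℝ (Cl p q) :=
  ((Pi.basisFun ℝ (Fin (p + q))).ExteriorAlgebra).map (CliffordAlgebra.equivExterior (Qpq p q)).symm

instance : Module.Finite ℝ (Cl p q) := Module.Finite.of_basis (extBasis p q)

lemma finrank_Cl : Module.finrank ℝ (Cl p q) = 2 ^ (p + q) := by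
  rw [Module.finrank_eq_card_basis (extBasis p q)]; simp

lemma tf_self (A : Finset (Fin (p + q))) :
    tf (Cl p q) (basisEl p q A) (basisEl p q A) = sg p q A * 2 ^ (p + q) := by
  rw [tf_apply, basisEl_sq, Algebra.algebraMap_eq_smul_one, map_smul, smul_eq_mul]
  congr 1
  simp only [tr, LinearMap.comp_apply, AlgHom.toLinearMap_apply, map_one]
  rw [LinearMap.trace_one, finrank_Cl]; simp

lemma indep : LinearIndependent ℝ (basisEl p q) := by
  apply LinearMap.BilinForm.linearIndependent_of_iIsOrtho (B := tf (Cl p q))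
  · intro A B h
    exact ortho p q h
  · intro A
    rw [tf_self]
    rcases sg_or p q A with h | h <;> simp [h]

noncomputable def bas : Module.Basis (Finset (Fin (p + q))) ℝ (Cl p q) :=
  basisOfLinearIndependentOfCardEqFinrank (indep p q) (by rw [finrank_Cl]; simp)

lemma bas_apply (A : Finset (Fin (p + q))) : bas p q A = basisEl p q A := by simp [bas]

noncomputable def tq (A : Type) [Ring A] [Algebra ℝ A] : QuadraticForm ℝ A :=
  (tf A).toQuadraticMap

lemma tr_comm (A : Type) [Ring A] [Algebra ℝ A] (x y : A) : tr A (x * y) = tr A (y * x) := by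
  simp only [tr, LinearMap.comp_apply, AlgHom.toLinearMap_apply, map_mul]
  exact LinearMap.trace_mul_comm _ _ _

lemma tq_equiv : (tq (Cl p q)).Equivalent
    (QuadraticMap.weightedSumSquares ℝ (fun A => (sg p q A * 2 ^ (p + q) : ℝ))) := by
  have h : (QuadraticMap.associated (R := ℝ) (tq (Cl p q))).IsOrthoᵢ (bas p q) := by
    intro A B hAB
    simp only [Function.onFun]
    rw [bas_apply, bas_apply, tq, QuadraticMap.associated_left_inverse]
    · exact ortho p q hAB
    · exact fun x y => tr_comm _ _ _
  have h2 := QuadraticMap.basisRepr_eq_of_iIsOrtho (tq (Cl p q)) (bas p q) h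
  have h3 : (fun A => tq (Cl p q) (bas p q A)) = (fun A => (sg p q A * 2 ^ (p + q) : ℝ)) := by
    funext A
    rw [bas_apply, ← tf_self]; rfl
  rw [h3] at h2
  rw [← h2]
  exact ⟨(tq (Cl p q)).isometryEquivBasisRepr (bas p q)⟩

lemma sig_eq : (sigPos (tq (Cl p q)), sigNeg (tq (Cl p q))) = extSig p q := by
  rw [extSig_eq, QuadraticForm.sigPos_of_equiv_weightedSumSquares (tq_equiv p q),
    QuadraticForm.sigNeg_of_equiv_weightedSumSquares (tq_equiv p q)]
  have h2 : (0 : ℝ) < 2 ^ (p + q) := by positivity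
  congr 2
  · ext A
    rcases sg_or p q A with h | h <;> simp [h, h2, h2.le]
  · ext A
    rcases sg_or p q A with h | h <;> simp [h, h2, h2.le]

end refl

lemma forward {p q p' q' : ℕ} (h : Iso p q p' q') : extSig p q = extSig p' q' := by
  obtain ⟨e⟩ := h
  have : (tq (Cl p q)).Equivalent (tq (Cl p' q')) := by
    refine ⟨⟨e.toLinearEquiv, fun x => ?_⟩⟩
    change tr _ (e x * e x) = tr _ (x * x)
    rw [← map_mul, tr_equiv]
  rw [← sig_eq, ← sig_eq, this.sigPos_eq, this.sigNeg_eq]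

section count

lemma sum_card (p q : ℕ) : (extSig p q).1 + (extSig p q).2 = 2 ^ (p + q) := by
  rw [extSig_eq]
  have : {A | sg p q A = -1} = {A | sg p q A = 1}ᶜ := by
    ext A
    rcases sg_or p q A with h | h <;> simp [h]
  simp only [this]
  rw [Set.ncard_add_ncard_compl]; simp

lemma diff_card (p q : ℕ) : ((extSig p q).1 : ℤ) - (extSig p q).2 = ∑ A, sg p q A := by
  rw [extSig_eq]
  have e : ∀ A, sg p q A = (if sg p q A = 1 then 1 else 0) - (if sg p q A = -1 then 1 else 0) := by
    intro A
    rcases sg_or p q A with h | h <;> simp [h]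
  rw [Finset.sum_congr rfl (fun A _ => e A), Finset.sum_sub_distrib]
  simp [Set.ncard_eq_toFinset_card']

lemma sgn_I (k : ℕ) : (((-1) ^ (k.choose 2) : ℤ) : ℝ) = ((1 - Complex.I) * Complex.I ^ k).re := by
  have : ∀ k : ℕ, ((-1) ^ (k.choose 2) : ℝ) = ((1 - Complex.I) * Complex.I ^ k).re ∧
     ((-1) ^ ((k+1).choose 2) : ℝ) = ((1 - Complex.I) * Complex.I ^ (k + 1)).re := by
    intro k
    induction k with
    | zero => simp
    | succ k ih =>
      refine ⟨ih.2, ?_⟩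
      have : (k + 1 + 1).choose 2 = 2 * k + 1 + k.choose 2 := by
        rw [Nat.choose_succ_succ' (k+1) 1, Nat.choose_succ_succ' k 1]; simp; ring
      have h2 : Complex.I ^ (k + 1 + 1) = - Complex.I ^ k := by
        rw [pow_succ, pow_succ, mul_assoc, Complex.I_mul_I]; ring
      rw [this, pow_add, ih.1, pow_add, pow_mul, h2]
      simp
  have := (this k).1
  push_cast
  exact this

lemma sum_sg (p q : ℕ) : ((∑ A, sg p q A : ℤ) : ℝ) =
    (Complex.I ^ p * (1 - Complex.I) ^ (p + q + 1)).re := by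
  have h1 : ∏ i : Fin (p + q), (1 + Complex.I * (eta p q i : ℂ))
      = (1 + Complex.I) ^ p * (1 - Complex.I) ^ q := by
    rw [Fin.prod_univ_add]
    simp [eta, sub_eq_add_neg]
  have h2 : (1 + Complex.I) = Complex.I * (1 - Complex.I) := by
    rw [mul_sub, Complex.I_mul_I]; ring
  have h3 : Complex.I ^ p * (1 - Complex.I) ^ (p + q + 1)
      = (1 - Complex.I) * ((1 + Complex.I) ^ p * (1 - Complex.I) ^ q) := by
    rw [h2, mul_pow, pow_succ, pow_add]; ring
  rw [h3, ← h1, Finset.prod_one_add]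
  push_cast
  rw [Finset.mul_sum, Complex.re_sum, Finset.powerset_univ]
  apply Finset.sum_congr rfl
  intro A _
  rw [Finset.prod_mul_distrib, Finset.prod_const, ← mul_assoc, sg]
  have : ∏ i ∈ A, (eta p q i : ℂ) = (((∏ i ∈ A, eta p q i : ℤ) : ℝ) : ℂ) := by push_cast; rfl
  rw [this, Complex.re_mul_ofReal, ← sgn_I]
  push_cast; rfl

lemma table (r a b : ℕ) (hr : r < 8) (ha : a < 4) (hb : b < 4)
    (h : (Complex.I ^ a * (1 - Complex.I) ^ r).re = (Complex.I ^ b * (1 - Complex.I) ^ r).re) :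
    a = b ∨ (a + b) % 4 = r % 4 := by
  interval_cases r <;> interval_cases a <;> interval_cases b <;>
    first
    | (left; rfl)
    | (right; rfl)
    | (exfalso; revert h; simp [pow_succ]; try norm_num)

lemma backward {p q p' q' : ℕ} (h : extSig p q = extSig p' q') : Iso p q p' q' := by
  have hn : p + q = p' + q' := by
    have := sum_card p q
    rw [h, sum_card] at this
    exact (Nat.pow_right_injective le_rfl this).symm
  have hd : (Complex.I ^ p * (1 - Complex.I) ^ (p + q + 1)).re =
      (Complex.I ^ p' * (1 - Complex.I) ^ (p + q + 1)).re := by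
    rw [← sum_sg, ← diff_card, h, diff_card, sum_sg, hn]
  have key : ∀ a, (Complex.I ^ a * (1 - Complex.I) ^ (p + q + 1)).re =
      16 ^ ((p + q + 1) / 8) * (Complex.I ^ (a % 4) * (1 - Complex.I) ^ ((p + q + 1) % 8)).re := by
    intro a
    have h8 : (1 - Complex.I) ^ 8 = ((16 : ℝ) : ℂ) := by
      have : (1 - Complex.I) ^ 2 = -2 * Complex.I := by
        ring_nf; simp; ring
      rw [show (8 : ℕ) = 2 * 4 from rfl, pow_mul, this, mul_pow, Complex.I_pow_four]
      norm_num
    rw [Complex.I_pow_eq_pow_mod a]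
    conv_lhs => rw [← Nat.div_add_mod (p + q + 1) 8, pow_add, pow_mul, h8, ← Complex.ofReal_pow]
    rw [mul_left_comm, Complex.re_ofReal_mul]
  rw [key, key] at hd
  have hd' := mul_left_cancel₀ (by positivity) hd
  rcases table _ _ _ (Nat.mod_lt _ (by norm_num)) (Nat.mod_lt _ (by norm_num))
    (Nat.mod_lt _ (by norm_num)) hd' with h | h
  · exact iso_mod4 hn h
  · exact iso_mod4' hn (by omega)

end count

end CS
/-- Two real Clifford algebras are isomorphic as real associative unital algebras
if and only if their exterior signatures coincide. -/
theorem iso_iff_extSig_eq (p₁ q₁ p₂ q₂ : ℕ) :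
    Nonempty (Cl p₁ q₁ ≃ₐ[ℝ] Cl p₂ q₂) ↔ extSig p₁ q₁ = extSig p₂ q₂ := by
  exact ⟨CS.forward, CS.backward⟩
end

section
/- (Generalized Pauli theorem, even case) Let n = p + q be even. Suppose γ₁,…,γ_n and β₁,…,β_n are two families of elements of Cl_{p,q} satisfying γ_a γ_b + γ_b γ_a = 2η_{ab}·e and β_a β_b + β_b β_a = 2η_{ab}·e for all a, b ∈ {1,…,n}, where η = diag(1,…,1,−1,…,−1) (p pluses, q minuses). Then there exists an invertible element T ∈ Cl_{p,q} such that γ_a = T^{−1} β_a T for all a = 1,…,n, and T is unique up to multiplication by a nonzero real scalar: if T' is invertible and also satisfies γ_a = T'^{−1} β_a T' for all a, then T' = λT for some λ ∈ ℝ, λ ≠ 0. -/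
open CliffordAlgebra

/-- The diagonal matrix `η = diag(1,…,1,−1,…,−1)` with `p` pluses and `q` minuses. -/
def etaPQ (p q : ℕ) (a b : Fin (p + q)) : ℝ :=
  if a = b then (if (a : ℕ) < p then 1 else -1) else 0

section helper
variable {I : Type} [Fintype I] [DecidableEq I] {A : Type} [Ring A] [Algebra ℝ A]

/-- Anticommutation relations. -/
structure PRel (w : I → ℝ) (β : I → A) : Prop where
  ww : ∀ a, w a * w a = 1
  sq : ∀ a, β a * β a = w a • (1 : A)
  anti : ∀ a b, a ≠ b → β a * β b = - (β b * β a)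

theorem PRel.comm_prod {w : I → ℝ} {β : I → A} (h : PRel w β) (a : I) (l : List I) :
    β a * (l.map β).prod = ((-1 : ℝ) ^ (l.length + l.count a)) • ((l.map β).prod * β a) := by
  induction l with
  | nil => simp
  | cons b l ih =>
    by_cases hab : b = a
    · subst hab
      simp only [List.map_cons, List.prod_cons, List.length_cons, List.count_cons_self]
      conv_lhs => rw [ih]
      rw [mul_smul_comm, mul_assoc]
      congr 1
      ring
    · simp only [List.map_cons, List.prod_cons, List.length_cons, List.count_cons_of_ne hab]
      rw [← mul_assoc, h.anti a b (Ne.symm hab), neg_mul, mul_assoc, ih, mul_smul_comm, mul_assoc,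
        ← neg_smul]
      congr 1
      ring

theorem PRel.cancel {w : I → ℝ} {β : I → A} (h : PRel w β) (a : I) (x : A) (hx : β a * x = 0) :
    x = 0 := by
  have h1 : β a * (β a * x) = 0 := by rw [hx, mul_zero]
  rw [← mul_assoc, h.sq, smul_mul_assoc, one_mul] at h1
  have h2 : w a • (w a • x) = 0 := by rw [h1, smul_zero]
  rwa [smul_smul, h.ww, one_smul] at h2

theorem PRel.cancel_prod {w : I → ℝ} {β : I → A} (h : PRel w β) (l : List I) (x : A)
    (hx : (l.map β).prod * x = 0) : x = 0 := by
  induction l with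
  | nil => simpa using hx
  | cons b l ih =>
    rw [List.map_cons, List.prod_cons, mul_assoc] at hx
    exact ih (h.cancel b _ hx)

theorem PRel.exists_omega {w : I → ℝ} {β : I → A} (h : PRel w β) (hn : Even (Fintype.card I)) :
    ∃ l : List I, ∀ a, β a * (l.map β).prod = - ((l.map β).prod * β a) := by
  refine ⟨Finset.univ.toList, fun a => ?_⟩
  rw [h.comm_prod, List.count_eq_one_of_mem (Finset.nodup_toList _) (by simp), Finset.length_toList,
    Finset.card_univ, hn.add_one.neg_one_pow]
  simp

theorem exists_fixed {w : I → ℝ} {β γ : I → A} (hβ : PRel w β) (hγ : PRel w γ)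
    (hn : Even (Fintype.card I)) (P : Submodule ℝ A) (hPl : ∀ a, ∀ x ∈ P, β a * x ∈ P)
    (hPr : ∀ a, ∀ x ∈ P, x * γ a ∈ P) (X : A) (hX : X ∈ P) (hX0 : X ≠ 0) :
    ∃ F ∈ P, F ≠ 0 ∧ ∀ a, β a * F = F * γ a := by
  obtain ⟨l, hl⟩ := hβ.exists_omega hn
  have hPprod : ∀ l : List I, ∀ x ∈ P, (l.map β).prod * x ∈ P := by
    intro l x hx
    induction l with
    | nil => simpa using hx
    | cons b l ih => rw [List.map_cons, List.prod_cons, mul_assoc]; exact hPl _ _ ih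
  suffices H : ∀ s : Finset I, ∃ F ∈ P, F ≠ 0 ∧ ∀ a ∈ s, β a * F = F * γ a by
    obtain ⟨F, h1, h2, h3⟩ := H Finset.univ
    exact ⟨F, h1, h2, fun a => h3 a (Finset.mem_univ _)⟩
  intro s
  induction s using Finset.induction_on with
  | empty => exact ⟨X, hX, hX0, by simp⟩
  | insert b s hb ih =>
    obtain ⟨F, hF, hF0, hs⟩ := ih
    by_cases hz : F + w b • (β b * F * γ b) = 0
    · have hbF : β b * F = - (F * γ b) := by
        have : β b * (F + w b • (β b * F * γ b)) = 0 := by rw [hz, mul_zero]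
        rw [mul_add, mul_smul_comm, mul_assoc (β b) F, ← mul_assoc (β b) (β b), hβ.sq,
          smul_mul_assoc, one_mul, smul_smul, hβ.ww, one_smul] at this
        exact eq_neg_of_add_eq_zero_left this
      refine ⟨(l.map β).prod * (β b * F), hPprod _ _ (hPl _ _ hF), fun h0 =>
        hF0 (hβ.cancel b _ (hβ.cancel_prod l _ h0)), fun a ha => ?_⟩
      rw [← mul_assoc, hl, neg_mul, mul_assoc, mul_assoc]
      by_cases hab : a = b
      · subst hab
        rw [mul_assoc]
        conv_lhs => rw [hbF]
        simp [mul_assoc]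
      · rw [← mul_assoc (β a), hβ.anti a b hab, neg_mul, mul_assoc,
          hs a ((Finset.mem_insert.1 ha).resolve_left hab)]
        simp [mul_assoc]
    · refine ⟨_, P.add_mem hF (P.smul_mem (w b) (hPr b _ (hPl b _ hF))), hz, fun a ha => ?_⟩
      by_cases hab : a = b
      · subst hab
        rw [mul_add, add_mul, mul_smul_comm, mul_assoc (β a) F, ← mul_assoc (β a) (β a), hβ.sq,
          smul_mul_assoc, one_mul, smul_smul, hβ.ww, one_smul, smul_mul_assoc, mul_assoc (β a),
          mul_assoc F, hγ.sq, mul_smul_comm, mul_one, mul_smul_comm, smul_smul, hβ.ww, one_smul,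
          add_comm]
      · have h1 := hs a ((Finset.mem_insert.1 ha).resolve_left hab)
        rw [mul_add, add_mul, h1, mul_smul_comm, smul_mul_assoc]
        congr 2
        rw [← mul_assoc, ← mul_assoc, hβ.anti a b hab, neg_mul, mul_assoc (β b), h1, neg_mul,
          mul_assoc (β b) _ (γ b), mul_assoc F, hγ.anti a b hab]
        simp [mul_assoc]

theorem PRel.reduce {w : I → ℝ} {β : I → A} (h : PRel w β) (k : ℕ) : ∀ l : List I, l.length ≤ k →
    ∃ c : ℝ, ∃ m : List I, m.Nodup ∧ (l.map β).prod = c • (m.map β).prod := by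
  induction k with
  | zero =>
    intro l hl
    have : l = [] := by simpa using hl
    subst this
    exact ⟨1, [], by simp, by simp⟩
  | succ k ih =>
    intro l hl
    cases l with
    | nil => exact ⟨1, [], by simp, by simp⟩
    | cons a l =>
      obtain ⟨c, m, hm, hc⟩ := ih l (by simpa using hl)
      by_cases ham : a ∈ m
      · obtain ⟨s, t, rfl⟩ := List.append_of_mem ham
        refine ⟨c * ((-1 : ℝ) ^ (s.length + s.count a) * w a), s ++ t, ?_, ?_⟩
        · exact hm.sublist (by simp)
        · rw [List.map_cons, List.prod_cons, hc]
          simp only [List.map_append, List.map_cons, List.prod_append, List.prod_cons]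
          rw [mul_smul_comm, ← mul_assoc, h.comm_prod, smul_mul_assoc, mul_assoc,
            ← mul_assoc (β a), h.sq, smul_mul_assoc, one_mul, mul_smul_comm, smul_smul, smul_smul,
            mul_assoc]
      · refine ⟨c, a :: m, by simp [ham, hm], ?_⟩
        simp [hc]

/-- span of nodup monomials -/
theorem PRel.span {w : I → ℝ} {β : I → A} (h : PRel w β)
    (hgen : Algebra.adjoin ℝ (Set.range β) = ⊤) :
    Submodule.span ℝ (Set.range fun l : {l : List I // l.Nodup} => (l.1.map β).prod) = ⊤ := by
  rw [eq_top_iff, ← Algebra.top_toSubmodule, ← hgen, Algebra.adjoin_eq_span, Submodule.span_le]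
  intro x hx
  have : ∃ l : List I, x = (l.map β).prod := by
    induction hx using Submonoid.closure_induction with
    | mem x hx => obtain ⟨i, rfl⟩ := hx; exact ⟨[i], by simp⟩
    | one => exact ⟨[], by simp⟩
    | mul x y _ _ hx hy =>
      obtain ⟨l, rfl⟩ := hx
      obtain ⟨m, rfl⟩ := hy
      exact ⟨l ++ m, by simp⟩
  obtain ⟨l, rfl⟩ := this
  obtain ⟨c, m, hm, hc⟩ := h.reduce _ l le_rfl
  rw [hc]
  exact Submodule.smul_mem _ _ (Submodule.subset_span ⟨⟨m, hm⟩, rfl⟩)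

theorem PRel.finite {w : I → ℝ} {β : I → A} (h : PRel w β)
    (hgen : Algebra.adjoin ℝ (Set.range β) = ⊤) : Module.Finite ℝ A := by
  refine ⟨?_⟩
  rw [← h.span hgen]
  exact Submodule.fg_span (Set.finite_range _)

theorem PRel.central [Nontrivial A] {w : I → ℝ} {β : I → A} (h : PRel w β)
    (hn : Even (Fintype.card I))
    (hgen : Algebra.adjoin ℝ (Set.range β) = ⊤) (X : A) (hX : ∀ a, β a * X = X * β a) :
    ∃ c : ℝ, X = c • (1 : A) := by
  have H : ∀ s : Finset I, X ∈ Submodule.span ℝ {x : A | ∃ l : List I, l.Nodup ∧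
      x = (l.map β).prod ∧ ∀ a ∈ s, β a * x = x * β a} := by
    intro s
    induction s using Finset.induction_on with
    | empty =>
      have : X ∈ (⊤ : Submodule ℝ A) := trivial
      rw [← h.span hgen] at this
      refine Submodule.span_mono ?_ this
      rintro _ ⟨l, rfl⟩
      exact ⟨l.1, l.2, rfl, by simp⟩
    | insert b s hb ih =>
      let V : A →ₗ[ℝ] A := LinearMap.id + w b • (LinearMap.mulLeft ℝ (β b) ∘ₗ LinearMap.mulRight ℝ (β b))
      have hV : ∀ x, V x = x + w b • (β b * (x * β b)) := fun x => by simp [V]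
      have hfix : ∀ x, β b * x = x * β b → V x = (2 : ℝ) • x := by
        intro x hx
        rw [hV, ← hx, ← mul_assoc, h.sq, smul_mul_assoc, one_mul, smul_smul, h.ww, one_smul, two_smul]
      have hneg : ∀ x, β b * x = - (x * β b) → V x = 0 := by
        intro x hx
        have : x * β b = - (β b * x) := by rw [hx, neg_neg]
        rw [hV, this, mul_neg, ← mul_assoc, h.sq, smul_mul_assoc, one_mul, smul_neg, smul_smul, h.ww,
          one_smul, add_neg_cancel]
      have h1 : V X ∈ Submodule.span ℝ {x : A | ∃ l : List I, l.Nodup ∧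
          x = (l.map β).prod ∧ ∀ a ∈ insert b s, β a * x = x * β a} := by
        have h2 := Submodule.mem_map_of_mem (f := V) ih
        rw [Submodule.map_span] at h2
        refine (Submodule.span_le.2 ?_) h2
        rintro _ ⟨x, ⟨l, hl, rfl, hx⟩, rfl⟩
        have h3 := h.comm_prod b l
        rcases neg_one_pow_eq_or ℝ (l.length + l.count b) with h4 | h4
        · rw [h4, one_smul] at h3
          rw [hfix _ h3]
          refine Submodule.smul_mem _ _ (Submodule.subset_span ⟨l, hl, rfl, ?_⟩)
          intro a ha
          rcases Finset.mem_insert.1 ha with rfl | ha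
          · exact h3
          · exact hx a ha
        · rw [h4, neg_one_smul] at h3
          rw [hneg _ h3]
          exact Submodule.zero_mem _
      rw [hfix X (hX b)] at h1
      have h2 := Submodule.smul_mem _ (2⁻¹ : ℝ) h1
      rwa [smul_smul, inv_mul_cancel₀ two_ne_zero, one_smul] at h2
  have H1 := H Finset.univ
  have H2 : X ∈ Submodule.span ℝ {(1 : A)} := by
    refine Submodule.span_mono ?_ H1
    rintro x ⟨l, hl, rfl, hx⟩
    have hev : ∀ a, Even (l.length + l.count a) := by
      intro a
      by_contra hodd
      rw [Nat.not_even_iff_odd] at hodd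
      have h3 := h.comm_prod a l
      rw [hodd.neg_one_pow, hx a (Finset.mem_univ _), neg_one_smul] at h3
      have h4 : (l.map β).prod * β a = 0 := by
        have h5 : (2 : ℝ) • ((l.map β).prod * β a) = 0 := by
          rw [two_smul]; nth_rewrite 1 [h3]; simp
        exact (smul_eq_zero.1 h5).resolve_left two_ne_zero
      have h6 := h.cancel_prod l _ h4
      have h7 := h.cancel a 1 (by rw [h6, zero_mul])
      exact one_ne_zero h7
    have hlen : Even l.length := by
      have h1 : Even (∑ a : I, (l.length + l.count a)) := Finset.even_sum _ fun a _ => hev a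
      rw [Finset.sum_add_distrib, Finset.sum_const, Finset.card_univ, smul_eq_mul] at h1
      have h2 : ∑ a : I, l.count a = l.length := by
        have := Multiset.sum_count_eq_card (s := Finset.univ) (m := (l : Multiset I)) (by simp)
        simpa using this
      rw [h2] at h1
      exact (Nat.even_add.1 h1).1 (hn.mul_right _)
    have hnil : l = [] := by
      refine List.eq_nil_iff_forall_not_mem.2 fun a ha => ?_
      have := hev a
      rw [List.count_eq_one_of_mem hl ha] at this
      exact absurd hlen (Nat.even_add_one.1 this)
    subst hnil
    simp
  obtain ⟨c, hc⟩ := Submodule.mem_span_singleton.1 H2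
  exact ⟨c, hc.symm⟩

/-- simplicity -/
theorem PRel.simple [Nontrivial A] {w : I → ℝ} {β : I → A} (h : PRel w β)
    (hn : Even (Fintype.card I))
    (hgen : Algebra.adjoin ℝ (Set.range β) = ⊤) (P : Submodule ℝ A)
    (hPl : ∀ a, ∀ x ∈ P, β a * x ∈ P)
    (hPr : ∀ a, ∀ x ∈ P, x * β a ∈ P) (X : A) (hX : X ∈ P) (hX0 : X ≠ 0) : (1 : A) ∈ P := by
  obtain ⟨F, hF, hF0, hc⟩ := exists_fixed h h hn P hPl hPr X hX hX0
  obtain ⟨c, rfl⟩ := h.central hn hgen F hc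
  have hc0 : c ≠ 0 := by rintro rfl; simp at hF0
  have := P.smul_mem c⁻¹ hF
  rwa [smul_smul, inv_mul_cancel₀ hc0, one_smul] at this

theorem PRel.pauli [Nontrivial A] {w : I → ℝ} {ε β γ : I → A} (hε : PRel w ε) (hβ : PRel w β)
    (hγ : PRel w γ) (hn : Even (Fintype.card I))
    (hgen : Algebra.adjoin ℝ (Set.range ε) = ⊤) (ψ : A →ₐ[ℝ] A) (hψ : ∀ a, ψ (ε a) = β a) :
    ∃ T : Aˣ, (∀ a, γ a = (↑T⁻¹ : A) * β a * (T : A)) ∧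
      ∀ T' : Aˣ, (∀ a, γ a = (↑T'⁻¹ : A) * β a * (T' : A)) →
        ∃ lam : ℝ, lam ≠ 0 ∧ (T' : A) = lam • (T : A) := by
  have hfin := hε.finite hgen
  have hinj : Function.Injective ψ := by
    rw [injective_iff_map_eq_zero]
    intro x hx
    by_contra hx0
    have := hε.simple hn hgen (LinearMap.ker ψ.toLinearMap) (by
      intro a x hx; simp at hx ⊢; simp [hx]) (by intro a x hx; simp at hx ⊢; simp [hx]) x
      (by simpa using hx) hx0
    simp at this
  have hsurj : Function.Surjective ψ :=
    (LinearMap.injective_iff_surjective (f := ψ.toLinearMap)).1 hinj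
  have hgenβ : Algebra.adjoin ℝ (Set.range β) = ⊤ := by
    have h1 : Set.range β = ψ '' Set.range ε := by
      rw [← Set.range_comp]; congr 1; ext a; exact (hψ a).symm
    rw [h1, ← AlgHom.map_adjoin, hgen, Algebra.map_top]
    exact (AlgHom.range_eq_top _).2 hsurj
  obtain ⟨T, -, hT0, hT⟩ := exists_fixed hβ hγ hn ⊤ (by simp) (by simp) (1 : A) trivial one_ne_zero
  have hreg : ∀ x, x * T = 0 → x = 0 := by
    intro x hx
    by_contra hx0
    have := hβ.simple hn hgenβ (LinearMap.ker (LinearMap.mulRight ℝ T)) (by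
      intro a x hx; simp at hx ⊢; rw [mul_assoc, hx, mul_zero]) (by
      intro a x hx; simp at hx ⊢; rw [mul_assoc, hT, ← mul_assoc, hx, zero_mul]) x
      (by simpa using hx) hx0
    simp at this
    exact hT0 this
  have hs : Function.Surjective (LinearMap.mulRight ℝ T) := by
    refine LinearMap.injective_iff_surjective.1 ?_
    rw [injective_iff_map_eq_zero]
    intro x hx
    exact hreg x (by simpa using hx)
  obtain ⟨S, hS⟩ := hs 1
  rw [LinearMap.mulRight_apply] at hS
  have hTS : T * S = 1 := by
    have : (T * S - 1) * T = 0 := by rw [sub_mul, mul_assoc, hS]; simp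
    exact sub_eq_zero.1 (hreg _ this)
  refine ⟨⟨T, S, hTS, hS⟩, fun a => ?_, fun T' hT' => ?_⟩
  · change γ a = S * β a * T
    rw [mul_assoc, hT, ← mul_assoc, hS, one_mul]
  · change ∃ lam : ℝ, lam ≠ 0 ∧ (T' : A) = lam • T
    have h1 : ∀ a, β a * T' = T' * γ a := by
      intro a
      rw [hT', ← mul_assoc, ← mul_assoc, Units.mul_inv, one_mul]
    have h2 : ∀ a, γ a * S = S * β a := by
      intro a
      calc γ a * S = S * T * γ a * S := by rw [hS, one_mul]
        _ = S * (T * γ a) * S := by noncomm_ring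
        _ = S * β a * (T * S) := by rw [← hT]; noncomm_ring
        _ = _ := by rw [hTS, mul_one]
    obtain ⟨c, hc⟩ := hβ.central hn hgenβ (T' * S) (by
      intro a
      rw [← mul_assoc, h1, mul_assoc, h2, mul_assoc])
    have h3 : (T' : A) = c • T := by
      calc (T' : A) = T' * S * T := by rw [mul_assoc, hS, mul_one]
        _ = c • T := by rw [hc, smul_mul_assoc, one_mul]
    refine ⟨c, ?_, h3⟩
    rintro rfl
    rw [zero_smul] at h3
    exact T'.ne_zero h3

theorem PRel.of_eta {p q : ℕ} {β : Fin (p + q) → A}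
    (hβ : ∀ a b, β a * β b + β b * β a = (2 * etaPQ p q a b) • (1 : A)) :
    PRel (fun i : Fin (p + q) => if (i : ℕ) < p then (1 : ℝ) else -1) β := by
  refine ⟨fun a => by split_ifs <;> norm_num, fun a => ?_, fun a b hab => ?_⟩
  · have h1 := hβ a a
    rw [← two_smul ℝ, mul_smul] at h1
    have h2 := smul_right_injective A (two_ne_zero (α := ℝ)) h1
    simpa [etaPQ] using h2
  · have h1 := hβ a b
    rw [etaPQ, if_neg hab, mul_zero, zero_smul] at h1
    exact eq_neg_of_add_eq_zero_left h1

theorem sum_sq {p q : ℕ} {β : Fin (p + q) → A}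
    (hβ : ∀ a b, β a * β b + β b * β a = (2 * etaPQ p q a b) • (1 : A)) (v : Fin (p + q) → ℝ) :
    (Fintype.linearCombination ℝ β v) * (Fintype.linearCombination ℝ β v) =
      algebraMap ℝ A (Qpq p q v) := by
  have key : (2 : ℝ) • ((Fintype.linearCombination ℝ β v) * (Fintype.linearCombination ℝ β v)) =
      (2 : ℝ) • algebraMap ℝ A (Qpq p q v) := by
    have e1 : (Fintype.linearCombination ℝ β v) * (Fintype.linearCombination ℝ β v) =
        ∑ i, ∑ j, (v i * v j) • (β i * β j) := by
      simp only [Fintype.linearCombination_apply, Finset.sum_mul_sum]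
      simp [smul_smul, mul_comm]
    have e2 : (Fintype.linearCombination ℝ β v) * (Fintype.linearCombination ℝ β v) =
        ∑ i, ∑ j, (v i * v j) • (β j * β i) := by
      rw [e1, Finset.sum_comm]
      simp [mul_comm]
    rw [two_smul]
    nth_rewrite 1 [e1]
    rw [e2]
    simp only [← Finset.sum_add_distrib, ← smul_add, hβ]
    simp only [smul_smul, ← Finset.sum_smul, Algebra.algebraMap_eq_smul_one]
    congr 1
    simp only [etaPQ, Qpq, QuadraticMap.weightedSumSquares_apply, Finset.mul_sum]
    refine Finset.sum_congr rfl fun i _ => ?_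
    simp
    split_ifs <;> ring
  exact smul_right_injective A (two_ne_zero (α := ℝ)) key

end helper

theorem gen_rel (p q : ℕ) (a b : Fin (p + q)) :
    gen p q a * gen p q b + gen p q b * gen p q a = (2 * etaPQ p q a b) • (1 : Cl p q) := by
  rw [gen, gen, ι_mul_ι_add_swap, Algebra.algebraMap_eq_smul_one]
  congr 1
  simp only [QuadraticMap.polar, Qpq, QuadraticMap.weightedSumSquares_apply, etaPQ,
    ← Finset.sum_sub_distrib]
  by_cases hab : a = b
  · subst hab
    rw [Finset.sum_eq_single a]
    · simp; split_ifs <;> norm_num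
    · intro i _ hi; simp [hi]
    · simp
  · rw [if_neg hab, mul_zero]
    refine Finset.sum_eq_zero fun i _ => ?_
    by_cases h1 : i = a
    · subst h1; simp [hab]
    · simp [h1]

theorem gen_adjoin (p q : ℕ) : Algebra.adjoin ℝ (Set.range (gen p q)) = ⊤ := by
  rw [eq_top_iff, ← CliffordAlgebra.adjoin_range_ι, Algebra.adjoin_le_iff]
  rintro _ ⟨v, rfl⟩
  rw [pi_eq_sum_univ' v, map_sum]
  refine Subalgebra.sum_mem _ fun i _ => ?_
  rw [map_smul]
  refine Subalgebra.smul_mem _ ?_ _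
  apply Algebra.subset_adjoin
  exact ⟨i, rfl⟩

/-- Generalized Pauli theorem, even case: if `n = p + q` is even and `γ`, `β` are
two families in `Cl_{p,q}` satisfying the defining anticommutation relations, then
there is an invertible `T` with `γ_a = T⁻¹ β_a T` for all `a`, unique up to a
nonzero real scalar. -/
theorem pauli_even (p q : ℕ) (hn : Even (p + q)) (γ β : Fin (p + q) → Cl p q)
    (hγ : ∀ a b, γ a * γ b + γ b * γ a = (2 * etaPQ p q a b) • (1 : Cl p q))
    (hβ : ∀ a b, β a * β b + β b * β a = (2 * etaPQ p q a b) • (1 : Cl p q)) :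
    ∃ T : (Cl p q)ˣ,
      (∀ a, γ a = (↑T⁻¹ : Cl p q) * β a * (T : Cl p q)) ∧
      ∀ T' : (Cl p q)ˣ, (∀ a, γ a = (↑T'⁻¹ : Cl p q) * β a * (T' : Cl p q)) →
        ∃ lam : ℝ, lam ≠ 0 ∧ (T' : Cl p q) = lam • (T : Cl p q) := by
  have : Invertible (2 : ℝ) := invertibleOfNonzero two_ne_zero
  refine (PRel.of_eta (gen_rel p q)).pauli (PRel.of_eta hβ) (PRel.of_eta hγ) (by simpa using hn)
    (gen_adjoin p q)
    (CliffordAlgebra.lift (Qpq p q) ⟨Fintype.linearCombination ℝ β, sum_sq hβ⟩) fun a => ?_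
  rw [gen, CliffordAlgebra.lift_ι_apply, Fintype.linearCombination_apply_single, one_smul]
end
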